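/- Well-typed FG programs translate to noninterfering CG programs: Suppose ℓi ⋢ ℓ, x : A^{ℓi} ⊢_pc e_s : bool^{ℓ} is derivable in FG, and x : A^{ℓi} ⊢_pc e_s : bool^{ℓ} ⇝ e_c. Then for all closed CG values v1, v2 of type ⟦A^{ℓi}⟧ = Labeled ℓi ⟨A⟩, if both e_c[v1/x] and e_c[v2/x], executed under CG's forcing semantics from the empty heap, terminate, then they produce the same value of type Labeled ℓ bool. -/

import Mathlib

/-!
Why the theorem holds.  The translation is type preserving (`FG2CG.typed`), so `ec` is a CG
computation of type `CG pc ⊥ (Labeled l bool)`, and it suffices to show noninterference for CG.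
This is done syntactically, which copes with higher-order state without step-indexing.

Run-time terms are typed relative to a store typing (`CT`).  On top of this, `CR` is a typed
indistinguishability relation on pairs of terms for an adversary at level `A`: a congruence for all
term formers, in which, moreover, any two well-typed terms of type `Labeled l τ` are related when
`l ⋢ A`.  Locations are compared through a partial bijection `β` between the two heaps, since
secret-dependent allocations may shift addresses.

Pure evaluation preserves `CR` (`CR.pure`).  Forcing preserves it too (`CR.force`), the crucial case
being `bind`: if the taint of the first computation is not visible to `A`, the continuations are
unrelated, but both run under a pc-label not below `A`.  By confinement (part of the subject
reduction theorem `CT.force`) they leave all `A`-visible locations unchanged, so the heaps stay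
related (`HR.highStep`), and the taint of the whole computation is invisible, so nothing is
required of the results beyond typing.

Since `li ⋢ l`, the inputs `v1` and `v2` are related for `A = l`; hence so are the results, and
related values of type `Labeled l bool` are equal (`CR.bool_eq`).
-/

/-! ## Shared expression syntax for the FG and CG calculi (de Bruijn indices) -/

inductive Exp : Type where
  | var (n : ℕ)
  | lam (e : Exp)
  | app (e1 e2 : Exp)
  | pair (e1 e2 : Exp)
  | fst (e : Exp)
  | snd (e : Exp)
  | inl (e : Exp)
  | inr (e : Exp)
  | case (e e1 e2 : Exp)      -- the two branches each bind one variable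
  | tt
  | ff
  | unit
  | loc (n : ℕ)
  | new (e : Exp)
  | deref (e : Exp)
  | assign (e1 e2 : Exp)
  | label (e : Exp)
  | unlabel (e : Exp)
  | toLabeled (e : Exp)
  | ret (e : Exp)
  | bind (e1 e2 : Exp)        -- e2 binds one variable
deriving DecidableEq

namespace Exp

/-- Shift free de Bruijn indices `≥ c` up by one. -/
def shift (c : ℕ) : Exp → Exp
  | var n => if n < c then var n else var (n + 1)
  | lam e => lam (e.shift (c + 1))
  | app e1 e2 => app (e1.shift c) (e2.shift c)
  | pair e1 e2 => pair (e1.shift c) (e2.shift c)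
  | fst e => fst (e.shift c)
  | snd e => snd (e.shift c)
  | inl e => inl (e.shift c)
  | inr e => inr (e.shift c)
  | case e e1 e2 => case (e.shift c) (e1.shift (c + 1)) (e2.shift (c + 1))
  | tt => tt
  | ff => ff
  | unit => unit
  | loc n => loc n
  | new e => new (e.shift c)
  | deref e => deref (e.shift c)
  | assign e1 e2 => assign (e1.shift c) (e2.shift c)
  | label e => label (e.shift c)
  | unlabel e => unlabel (e.shift c)
  | toLabeled e => toLabeled (e.shift c)
  | ret e => ret (e.shift c)
  | bind e1 e2 => bind (e1.shift c) (e2.shift (c + 1))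

/-- Substitution `e[v/k]` of `v` for de Bruijn index `k` in `e`. -/
def subst : Exp → Exp → ℕ → Exp
  | var n, v, k => if n = k then v else if k < n then var (n - 1) else var n
  | lam e, v, k => lam (e.subst (v.shift 0) (k + 1))
  | app e1 e2, v, k => app (e1.subst v k) (e2.subst v k)
  | pair e1 e2, v, k => pair (e1.subst v k) (e2.subst v k)
  | fst e, v, k => fst (e.subst v k)
  | snd e, v, k => snd (e.subst v k)
  | inl e, v, k => inl (e.subst v k)
  | inr e, v, k => inr (e.subst v k)
  | case e e1 e2, v, k =>
      case (e.subst v k) (e1.subst (v.shift 0) (k + 1)) (e2.subst (v.shift 0) (k + 1))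
  | tt, _, _ => tt
  | ff, _, _ => ff
  | unit, _, _ => unit
  | loc n, _, _ => loc n
  | new e, v, k => new (e.subst v k)
  | deref e, v, k => deref (e.subst v k)
  | assign e1 e2, v, k => assign (e1.subst v k) (e2.subst v k)
  | label e, v, k => label (e.subst v k)
  | unlabel e, v, k => unlabel (e.subst v k)
  | toLabeled e, v, k => toLabeled (e.subst v k)
  | ret e, v, k => ret (e.subst v k)
  | bind e1 e2, v, k => bind (e1.subst v k) (e2.subst (v.shift 0) (k + 1))

end Exp

/-- Heaps: locations are list indices; allocation appends. -/
abbrev Heap := List Exp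

/-! ## Values -/

/-- Values of the FG language. -/
inductive FGVal : Exp → Prop where
  | lam : FGVal (.lam e)
  | pair : FGVal v1 → FGVal v2 → FGVal (.pair v1 v2)
  | inl : FGVal v → FGVal (.inl v)
  | inr : FGVal v → FGVal (.inr v)
  | tt : FGVal .tt
  | ff : FGVal .ff
  | unit : FGVal .unit
  | loc : FGVal (.loc n)

/-- Values of the CG language (monadic expressions are suspended computations,
hence values; labeled values are values). -/
inductive CGVal : Exp → Prop where
  | lam : CGVal (.lam e)
  | pair : CGVal v1 → CGVal v2 → CGVal (.pair v1 v2)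
  | inl : CGVal v → CGVal (.inl v)
  | inr : CGVal v → CGVal (.inr v)
  | tt : CGVal .tt
  | ff : CGVal .ff
  | unit : CGVal .unit
  | loc : CGVal (.loc n)
  | label : CGVal v → CGVal (.label v)
  | ret : CGVal (.ret e)
  | bind : CGVal (.bind e1 e2)
  | unlabel : CGVal (.unlabel e)
  | toLabeled : CGVal (.toLabeled e)
  | new : CGVal (.new e)
  | deref : CGVal (.deref e)
  | assign : CGVal (.assign e1 e2)

/-! ## FG: deterministic big-step call-by-value evaluation over heaps -/

inductive FGEval : Heap → Exp → Heap → Exp → Prop where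
  | lam : FGEval h (.lam e) h (.lam e)
  | tt : FGEval h .tt h .tt
  | ff : FGEval h .ff h .ff
  | unit : FGEval h .unit h .unit
  | loc : FGEval h (.loc n) h (.loc n)
  | app : FGEval h e1 h1 (.lam e) → FGEval h1 e2 h2 v2 →
      FGEval h2 (e.subst v2 0) h3 v → FGEval h (.app e1 e2) h3 v
  | pair : FGEval h e1 h1 v1 → FGEval h1 e2 h2 v2 →
      FGEval h (.pair e1 e2) h2 (.pair v1 v2)
  | fst : FGEval h e h1 (.pair v1 v2) → FGEval h (.fst e) h1 v1
  | snd : FGEval h e h1 (.pair v1 v2) → FGEval h (.snd e) h1 v2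
  | inl : FGEval h e h1 v → FGEval h (.inl e) h1 (.inl v)
  | inr : FGEval h e h1 v → FGEval h (.inr e) h1 (.inr v)
  | caseL : FGEval h e h1 (.inl v) → FGEval h1 (e1.subst v 0) h2 w →
      FGEval h (.case e e1 e2) h2 w
  | caseR : FGEval h e h1 (.inr v) → FGEval h1 (e2.subst v 0) h2 w →
      FGEval h (.case e e1 e2) h2 w
  | new : FGEval h e h1 v → FGEval h (.new e) (h1 ++ [v]) (.loc h1.length)
  | deref : FGEval h e h1 (.loc n) → h1[n]? = some v → FGEval h (.deref e) h1 v
  | assign : FGEval h e1 h1 (.loc n) → FGEval h1 e2 h2 v →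
      FGEval h (.assign e1 e2) (h2.set n v) .unit

/-! ## CG: pure big-step evaluation (no heap) and forcing semantics over heaps -/

/-- Pure (heap-free) big-step evaluation for CG.  Monadic expressions are
suspended computations and evaluate to themselves. -/
inductive CGPure : Exp → Exp → Prop where
  | lam : CGPure (.lam e) (.lam e)
  | tt : CGPure .tt .tt
  | ff : CGPure .ff .ff
  | unit : CGPure .unit .unit
  | loc : CGPure (.loc n) (.loc n)
  | app : CGPure e1 (.lam e) → CGPure e2 v2 → CGPure (e.subst v2 0) v →
      CGPure (.app e1 e2) v
  | pair : CGPure e1 v1 → CGPure e2 v2 → CGPure (.pair e1 e2) (.pair v1 v2)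
  | fst : CGPure e (.pair v1 v2) → CGPure (.fst e) v1
  | snd : CGPure e (.pair v1 v2) → CGPure (.snd e) v2
  | inl : CGPure e v → CGPure (.inl e) (.inl v)
  | inr : CGPure e v → CGPure (.inr e) (.inr v)
  | caseL : CGPure e (.inl v) → CGPure (e1.subst v 0) w → CGPure (.case e e1 e2) w
  | caseR : CGPure e (.inr v) → CGPure (e2.subst v 0) w → CGPure (.case e e1 e2) w
  | label : CGPure e v → CGPure (.label e) (.label v)
  | ret : CGPure (.ret e) (.ret e)
  | bind : CGPure (.bind e1 e2) (.bind e1 e2)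
  | unlabel : CGPure (.unlabel e) (.unlabel e)
  | toLabeled : CGPure (.toLabeled e) (.toLabeled e)
  | new : CGPure (.new e) (.new e)
  | deref : CGPure (.deref e) (.deref e)
  | assign : CGPure (.assign e1 e2) (.assign e1 e2)

/-- Forcing semantics for CG's monadic computations: actually performs heap
reads, writes and allocations. -/
inductive CGForce : Heap → Exp → Heap → Exp → Prop where
  | ret : CGPure e (.ret e0) → CGPure e0 v → CGForce h e h v
  | bind : CGPure e (.bind e1 e2) → CGForce h e1 h1 v1 →
      CGForce h1 (e2.subst v1 0) h2 v → CGForce h e h2 v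
  | unlabel : CGPure e (.unlabel e0) → CGPure e0 (.label v) → CGForce h e h v
  | toLabeled : CGPure e (.toLabeled e0) → CGForce h e0 h1 v →
      CGForce h e h1 (.label v)
  | new : CGPure e (.new e0) → CGPure e0 v → CGForce h e (h ++ [v]) (.loc h.length)
  | deref : CGPure e (.deref e0) → CGPure e0 (.loc n) → h[n]? = some v →
      CGForce h e h v
  | assign : CGPure e (.assign e1 e2) → CGPure e1 (.loc n) → CGPure e2 v →
      CGForce h e (h.set n v) .unit

/-! ## FG types (every type constructor carries its outer security label) -/

inductive FGTy (L : Type) : Type where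
  | bool (l : L)
  | unit (l : L)
  | fn (t1 : FGTy L) (le : L) (t2 : FGTy L) (l : L)
  | prod (t1 t2 : FGTy L) (l : L)
  | sum (t1 t2 : FGTy L) (l : L)
  | ref (t : FGTy L) (l : L)

/-- The outer label of an FG type (`(A^ℓ).lab = ℓ`).
`τ.lab ≥ ℓ` is the protection judgment `τ ↘ ℓ`. -/
def FGTy.lab {L : Type} : FGTy L → L
  | .bool l => l
  | .unit l => l
  | .fn _ _ _ l => l
  | .prod _ _ l => l
  | .sum _ _ l => l
  | .ref _ l => l

/-- FG subtyping: structural, covariant in security labels, contravariant in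
the pc-label of function types, invariant in the content type of references. -/
inductive FGSub {L : Type} [Lattice L] [BoundedOrder L] : FGTy L → FGTy L → Prop where
  | bool : l ≤ l' → FGSub (.bool l) (.bool l')
  | unit : l ≤ l' → FGSub (.unit l) (.unit l')
  | fn : FGSub τ1' τ1 → le' ≤ le → FGSub τ2 τ2' → l ≤ l' →
      FGSub (.fn τ1 le τ2 l) (.fn τ1' le' τ2' l')
  | prod : FGSub τ1 τ1' → FGSub τ2 τ2' → l ≤ l' →
      FGSub (.prod τ1 τ2 l) (.prod τ1' τ2' l')
  | sum : FGSub τ1 τ1' → FGSub τ2 τ2' → l ≤ l' →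
      FGSub (.sum τ1 τ2 l) (.sum τ1' τ2' l')
  | ref : l ≤ l' → FGSub (.ref τ l) (.ref τ l')

/-- The FG typing judgment `Γ ⊢_pc e : τ`. -/
inductive FGTyped {L : Type} [Lattice L] [BoundedOrder L] :
    List (FGTy L) → L → Exp → FGTy L → Prop where
  | var : Γ[n]? = some τ → FGTyped Γ pc (.var n) τ
  | tt : FGTyped Γ pc .tt (.bool ⊥)
  | ff : FGTyped Γ pc .ff (.bool ⊥)
  | unit : FGTyped Γ pc .unit (.unit ⊥)
  | lam : FGTyped (τ1 :: Γ) le e τ2 → FGTyped Γ pc (.lam e) (.fn τ1 le τ2 ⊥)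
  | app : FGTyped Γ pc e1 (.fn τ1 le τ2 l) → FGTyped Γ pc e2 τ1 →
      l ⊔ pc ≤ le → l ≤ τ2.lab → FGTyped Γ pc (.app e1 e2) τ2
  | pair : FGTyped Γ pc e1 τ1 → FGTyped Γ pc e2 τ2 →
      FGTyped Γ pc (.pair e1 e2) (.prod τ1 τ2 ⊥)
  | fst : FGTyped Γ pc e (.prod τ1 τ2 l) → l ≤ τ1.lab → FGTyped Γ pc (.fst e) τ1
  | snd : FGTyped Γ pc e (.prod τ1 τ2 l) → l ≤ τ2.lab → FGTyped Γ pc (.snd e) τ2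
  | inl : FGTyped Γ pc e τ1 → FGTyped Γ pc (.inl e) (.sum τ1 τ2 ⊥)
  | inr : FGTyped Γ pc e τ2 → FGTyped Γ pc (.inr e) (.sum τ1 τ2 ⊥)
  | case : FGTyped Γ pc e (.sum τ1 τ2 l) → FGTyped (τ1 :: Γ) (pc ⊔ l) e1 τ →
      FGTyped (τ2 :: Γ) (pc ⊔ l) e2 τ → l ≤ τ.lab →
      FGTyped Γ pc (.case e e1 e2) τ
  | new : FGTyped Γ pc e τ → pc ≤ τ.lab → FGTyped Γ pc (.new e) (.ref τ ⊥)
  | deref : FGTyped Γ pc e (.ref τ l) → FGSub τ τ' → l ≤ τ'.lab →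
      FGTyped Γ pc (.deref e) τ'
  | assign : FGTyped Γ pc e1 (.ref τ l) → FGTyped Γ pc e2 τ →
      pc ⊔ l ≤ τ.lab → FGTyped Γ pc (.assign e1 e2) (.unit ⊥)
  | sub : FGTyped Γ pc' e τ' → FGSub τ' τ → pc ≤ pc' → FGTyped Γ pc e τ

/-! ## CG types -/

inductive CGTy (L : Type) : Type where
  | bool
  | unit
  | fn (t1 t2 : CGTy L)
  | prod (t1 t2 : CGTy L)
  | sum (t1 t2 : CGTy L)
  | ref (l : L) (t : CGTy L)
  | labeled (l : L) (t : CGTy L)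
  | monad (l1 l2 : L) (t : CGTy L)   -- CG ℓ1 ℓ2 τ : pc-label ℓ1, taint label ℓ2

/-- CG subtyping: `Labeled ℓ τ` covariant in `ℓ` and `τ`; `CG ℓ1 ℓ2 τ`
contravariant in `ℓ1`, covariant in `ℓ2` and `τ`. -/
inductive CGSub {L : Type} [Lattice L] [BoundedOrder L] : CGTy L → CGTy L → Prop where
  | bool : CGSub .bool .bool
  | unit : CGSub .unit .unit
  | fn : CGSub τ1' τ1 → CGSub τ2 τ2' → CGSub (.fn τ1 τ2) (.fn τ1' τ2')
  | prod : CGSub τ1 τ1' → CGSub τ2 τ2' → CGSub (.prod τ1 τ2) (.prod τ1' τ2')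
  | sum : CGSub τ1 τ1' → CGSub τ2 τ2' → CGSub (.sum τ1 τ2) (.sum τ1' τ2')
  | ref : CGSub (.ref l τ) (.ref l τ)
  | labeled : CGSub τ τ' → l ≤ l' → CGSub (.labeled l τ) (.labeled l' τ')
  | monad : l1' ≤ l1 → l2 ≤ l2' → CGSub τ τ' →
      CGSub (.monad l1 l2 τ) (.monad l1' l2' τ')

/-- The CG typing judgment `Γ ⊢ e : τ`. -/
inductive CGTyped {L : Type} [Lattice L] [BoundedOrder L] :
    List (CGTy L) → Exp → CGTy L → Prop where
  | var : Γ[n]? = some τ → CGTyped Γ (.var n) τ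
  | tt : CGTyped Γ .tt .bool
  | ff : CGTyped Γ .ff .bool
  | unit : CGTyped Γ .unit .unit
  | lam : CGTyped (τ1 :: Γ) e τ2 → CGTyped Γ (.lam e) (.fn τ1 τ2)
  | app : CGTyped Γ e1 (.fn τ1 τ2) → CGTyped Γ e2 τ1 → CGTyped Γ (.app e1 e2) τ2
  | pair : CGTyped Γ e1 τ1 → CGTyped Γ e2 τ2 → CGTyped Γ (.pair e1 e2) (.prod τ1 τ2)
  | fst : CGTyped Γ e (.prod τ1 τ2) → CGTyped Γ (.fst e) τ1
  | snd : CGTyped Γ e (.prod τ1 τ2) → CGTyped Γ (.snd e) τ2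
  | inl : CGTyped Γ e τ1 → CGTyped Γ (.inl e) (.sum τ1 τ2)
  | inr : CGTyped Γ e τ2 → CGTyped Γ (.inr e) (.sum τ1 τ2)
  | case : CGTyped Γ e (.sum τ1 τ2) → CGTyped (τ1 :: Γ) e1 τ →
      CGTyped (τ2 :: Γ) e2 τ → CGTyped Γ (.case e e1 e2) τ
  | ret : CGTyped Γ e τ → CGTyped Γ (.ret e) (.monad ⊤ ⊥ τ)
  | bind : CGTyped Γ e1 (.monad l1 l2 τ) → CGTyped (τ :: Γ) e2 (.monad l3 l4 τ') →
      l ≤ l1 → l ≤ l3 → l2 ≤ l3 → l2 ≤ l4 →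
      CGTyped Γ (.bind e1 e2) (.monad l l4 τ')
  | label : CGTyped Γ e τ → CGTyped Γ (.label e) (.labeled l τ)
  | unlabel : CGTyped Γ e (.labeled l τ) → CGTyped Γ (.unlabel e) (.monad ⊤ l τ)
  | new : CGTyped Γ e (.labeled l τ) → CGTyped Γ (.new e) (.monad l ⊥ (.ref l τ))
  | deref : CGTyped Γ e (.ref l' τ) → CGTyped Γ (.deref e) (.monad ⊤ ⊥ (.labeled l' τ))
  | assign : CGTyped Γ e1 (.ref l τ) → CGTyped Γ e2 (.labeled l τ) →
      CGTyped Γ (.assign e1 e2) (.monad l ⊥ .unit)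
  | toLabeled : CGTyped Γ e (.monad l l' τ) →
      CGTyped Γ (.toLabeled e) (.monad l ⊥ (.labeled l' τ))
  | sub : CGTyped Γ e τ' → CGSub τ' τ → CGTyped Γ e τ

/-! ## The CG-to-FG type translation ⟦·⟧ -/

def toFG {L : Type} [Lattice L] [BoundedOrder L] : CGTy L → FGTy L
  | .bool => .bool ⊥
  | .unit => .unit ⊥
  | .fn τ1 τ2 => .fn (toFG τ1) ⊤ (toFG τ2) ⊥
  | .prod τ1 τ2 => .prod (toFG τ1) (toFG τ2) ⊥
  | .sum τ1 τ2 => .sum (toFG τ1) (toFG τ2) ⊥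
  | .ref l τ => .ref (.sum (toFG τ) (.unit ⊥) l) ⊥
  | .labeled l τ => .sum (toFG τ) (.unit ⊥) l
  | .monad l1 l2 τ => .fn (.unit ⊥) l1 (.sum (toFG τ) (.unit ⊥) l2) ⊥

/-! ## The FG-to-CG type translation: ⟦A^ℓ⟧ = Labeled ℓ ⟨A⟩ -/

/-- `⟨A⟩`: translation of the unlabeled part of an FG type. -/
def trA {L : Type} [Lattice L] [BoundedOrder L] : FGTy L → CGTy L
  | .bool _ => .bool
  | .unit _ => .unit
  | .fn τ1 le τ2 _ =>
      .fn (.labeled τ1.lab (trA τ1)) (.monad le ⊥ (.labeled τ2.lab (trA τ2)))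
  | .prod τ1 τ2 _ => .prod (.labeled τ1.lab (trA τ1)) (.labeled τ2.lab (trA τ2))
  | .sum τ1 τ2 _ => .sum (.labeled τ1.lab (trA τ1)) (.labeled τ2.lab (trA τ2))
  | .ref τ _ => .ref τ.lab (trA τ)

/-- `⟦A^ℓ⟧ = Labeled ℓ ⟨A⟩`. -/
def toCG {L : Type} [Lattice L] [BoundedOrder L] (τ : FGTy L) : CGTy L :=
  .labeled τ.lab (trA τ)

/-! ## CG-to-FG expression translation `Γ ⊢ e : τ ⇝ e_F` -/

inductive CG2FG {L : Type} [Lattice L] [BoundedOrder L] :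
    List (CGTy L) → Exp → CGTy L → Exp → Prop where
  | var : Γ[n]? = some τ → CG2FG Γ (.var n) τ (.var n)
  | tt : CG2FG Γ .tt .bool .tt
  | ff : CG2FG Γ .ff .bool .ff
  | unit : CG2FG Γ .unit .unit .unit
  | lam : CG2FG (τ1 :: Γ) e τ2 eF → CG2FG Γ (.lam e) (.fn τ1 τ2) (.lam eF)
  | app : CG2FG Γ e1 (.fn τ1 τ2) eF1 → CG2FG Γ e2 τ1 eF2 →
      CG2FG Γ (.app e1 e2) τ2 (.app eF1 eF2)
  | pair : CG2FG Γ e1 τ1 eF1 → CG2FG Γ e2 τ2 eF2 →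
      CG2FG Γ (.pair e1 e2) (.prod τ1 τ2) (.pair eF1 eF2)
  | fst : CG2FG Γ e (.prod τ1 τ2) eF → CG2FG Γ (.fst e) τ1 (.fst eF)
  | snd : CG2FG Γ e (.prod τ1 τ2) eF → CG2FG Γ (.snd e) τ2 (.snd eF)
  | inl : CG2FG Γ e τ1 eF → CG2FG Γ (.inl e) (.sum τ1 τ2) (.inl eF)
  | inr : CG2FG Γ e τ2 eF → CG2FG Γ (.inr e) (.sum τ1 τ2) (.inr eF)
  | case : CG2FG Γ e (.sum τ1 τ2) eF → CG2FG (τ1 :: Γ) e1 τ eF1 →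
      CG2FG (τ2 :: Γ) e2 τ eF2 → CG2FG Γ (.case e e1 e2) τ (.case eF eF1 eF2)
  | label : CG2FG Γ e τ eF → CG2FG Γ (.label e) (.labeled l τ) (.inl eF)
  | unlabel : CG2FG Γ e (.labeled l τ) eF →
      CG2FG Γ (.unlabel e) (.monad ⊤ l τ) (.lam (eF.shift 0))
  | toLabeled : CG2FG Γ e (.monad l1 l2 τ) eF →
      CG2FG Γ (.toLabeled e) (.monad l1 ⊥ (.labeled l2 τ))
        (.lam (.inl (.app (eF.shift 0) .unit)))
  | ret : CG2FG Γ e τ eF → CG2FG Γ (.ret e) (.monad ⊤ ⊥ τ) (.lam (.inl (eF.shift 0)))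
  | bind : CG2FG Γ e1 (.monad l1 l2 τ) eF1 →
      CG2FG (τ :: Γ) e2 (.monad l3 l4 τ') eF2 →
      l ≤ l1 → l ≤ l3 → l2 ≤ l3 → l2 ≤ l4 →
      CG2FG Γ (.bind e1 e2) (.monad l l4 τ')
        (.lam (.case (.app (eF1.shift 0) .unit) (.app (eF2.shift 1) .unit)
          (.inr .unit)))
  | new : CG2FG Γ e (.labeled l τ) eF →
      CG2FG Γ (.new e) (.monad l ⊥ (.ref l τ)) (.lam (.inl (.new (eF.shift 0))))
  | deref : CG2FG Γ e (.ref l' τ) eF →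
      CG2FG Γ (.deref e) (.monad ⊤ ⊥ (.labeled l' τ))
        (.lam (.inl (.deref (eF.shift 0))))
  | assign : CG2FG Γ e1 (.ref l τ) eF1 → CG2FG Γ e2 (.labeled l τ) eF2 →
      CG2FG Γ (.assign e1 e2) (.monad l ⊥ .unit)
        (.lam (.inl (.assign (eF1.shift 0) (eF2.shift 0))))
  | sub : CG2FG Γ e τ' eF → CGSub τ' τ → CG2FG Γ e τ eF

/-! ## FG-to-CG expression translation `Γ ⊢_pc e : τ ⇝ e_c` -/

/-- `coerce_taint ≜ λx. toLabeled(bind(x, y. unlabel y))`. -/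
def coerceTaint : Exp := .lam (.toLabeled (.bind (.var 0) (.unlabel (.var 0))))

inductive FG2CG {L : Type} [Lattice L] [BoundedOrder L] :
    List (FGTy L) → L → Exp → FGTy L → Exp → Prop where
  | var : Γ[n]? = some τ → FG2CG Γ pc (.var n) τ (.ret (.var n))
  | tt : FG2CG Γ pc .tt (.bool ⊥) (.ret (.label .tt))
  | ff : FG2CG Γ pc .ff (.bool ⊥) (.ret (.label .ff))
  | unit : FG2CG Γ pc .unit (.unit ⊥) (.ret (.label .unit))
  | lam : FG2CG (τ1 :: Γ) le e τ2 ec →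
      FG2CG Γ pc (.lam e) (.fn τ1 le τ2 ⊥) (.ret (.label (.lam ec)))
  | app : FG2CG Γ pc e1 (.fn τ1 le τ2 l) ec1 → FG2CG Γ pc e2 τ1 ec2 →
      l ⊔ pc ≤ le → l ≤ τ2.lab →
      FG2CG Γ pc (.app e1 e2) τ2
        (.app coerceTaint
          (.bind ec1 (.bind (ec2.shift 0)
            (.bind (.unlabel (.var 1)) (.app (.var 0) (.var 1))))))
  | pair : FG2CG Γ pc e1 τ1 ec1 → FG2CG Γ pc e2 τ2 ec2 →
      FG2CG Γ pc (.pair e1 e2) (.prod τ1 τ2 ⊥)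
        (.bind ec1 (.bind (ec2.shift 0) (.ret (.label (.pair (.var 1) (.var 0))))))
  | fst : FG2CG Γ pc e (.prod τ1 τ2 l) ec → l ≤ τ1.lab →
      FG2CG Γ pc (.fst e) τ1
        (.app coerceTaint
          (.bind ec (.bind (.unlabel (.var 0)) (.ret (.fst (.var 0))))))
  | snd : FG2CG Γ pc e (.prod τ1 τ2 l) ec → l ≤ τ2.lab →
      FG2CG Γ pc (.snd e) τ2
        (.app coerceTaint
          (.bind ec (.bind (.unlabel (.var 0)) (.ret (.snd (.var 0))))))
  | inl : FG2CG Γ pc e τ1 ec →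
      FG2CG Γ pc (.inl e) (.sum τ1 τ2 ⊥) (.bind ec (.ret (.label (.inl (.var 0)))))
  | inr : FG2CG Γ pc e τ2 ec →
      FG2CG Γ pc (.inr e) (.sum τ1 τ2 ⊥) (.bind ec (.ret (.label (.inr (.var 0)))))
  | case : FG2CG Γ pc e (.sum τ1 τ2 l) ec →
      FG2CG (τ1 :: Γ) (pc ⊔ l) e1 τ ec1 → FG2CG (τ2 :: Γ) (pc ⊔ l) e2 τ ec2 →
      l ≤ τ.lab →
      FG2CG Γ pc (.case e e1 e2) τ
        (.app coerceTaint
          (.bind ec (.bind (.unlabel (.var 0))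
            (.case (.var 0) ((ec1.shift 1).shift 1) ((ec2.shift 1).shift 1)))))
  | new : FG2CG Γ pc e τ ec → pc ≤ τ.lab →
      FG2CG Γ pc (.new e) (.ref τ ⊥)
        (.bind ec (.bind (.new (.var 0)) (.ret (.label (.var 0)))))
  | deref : FG2CG Γ pc e (.ref τ l) ec → FGSub τ τ' → l ≤ τ'.lab →
      FG2CG Γ pc (.deref e) τ'
        (.app coerceTaint
          (.bind ec (.bind (.unlabel (.var 0)) (.deref (.var 0)))))
  | assign : FG2CG Γ pc e1 (.ref τ l) ec1 → FG2CG Γ pc e2 τ ec2 →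
      pc ⊔ l ≤ τ.lab →
      FG2CG Γ pc (.assign e1 e2) (.unit ⊥)
        (.bind (.toLabeled (.bind ec1 (.bind (ec2.shift 0)
          (.bind (.unlabel (.var 1)) (.assign (.var 0) (.var 1))))))
          (.ret (.label .unit)))
  | sub : FG2CG Γ pc' e τ' ec → FGSub τ' τ → pc ≤ pc' → FG2CG Γ pc e τ ec

/-! ### Subtyping in CG -/

theorem CGSub.refl {L : Type} [Lattice L] [BoundedOrder L] (τ : CGTy L) : CGSub τ τ := by
  induction τ with
  | bool => exact .bool
  | unit => exact .unit
  | fn _ _ h1 h2 => exact .fn h1 h2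
  | prod _ _ h1 h2 => exact .prod h1 h2
  | sum _ _ h1 h2 => exact .sum h1 h2
  | ref => exact .ref
  | labeled _ _ h => exact .labeled h le_rfl
  | monad _ _ _ h => exact .monad le_rfl le_rfl h

theorem CGSub.trans {L : Type} [Lattice L] [BoundedOrder L] {σ τ ρ : CGTy L}
    (a : CGSub σ τ) (b : CGSub τ ρ) : CGSub σ ρ := by
  -- The middle type is the one to induct on: contravariance swaps the outer two.
  induction τ generalizing σ ρ with
  | bool => cases a; exact b
  | unit => cases a; exact b
  | ref => cases a; exact b
  | fn _ _ h1 h2 =>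
    cases a with | fn a1 a2 => cases b with | fn b1 b2 => exact .fn (h1 b1 a1) (h2 a2 b2)
  | prod _ _ h1 h2 =>
    cases a with | prod a1 a2 => cases b with | prod b1 b2 => exact .prod (h1 a1 b1) (h2 a2 b2)
  | sum _ _ h1 h2 =>
    cases a with | sum a1 a2 => cases b with | sum b1 b2 => exact .sum (h1 a1 b1) (h2 a2 b2)
  | labeled _ _ h =>
    cases a with | labeled a1 a2 => cases b with | labeled b1 b2 =>
      exact .labeled (h a1 b1) (a2.trans b2)
  | monad _ _ _ h =>
    cases a with | monad a1 a2 a3 => cases b with | monad b1 b2 b3 =>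
      exact .monad (b1.trans a1) (a2.trans b2) (h a3 b3)

/-! ### The translation produces well-typed CG computations -/

theorem CGTyped.shift {L : Type} [Lattice L] [BoundedOrder L] (σ : CGTy L) {Γ2 : List (CGTy L)}
    {Γ : List (CGTy L)} {e : Exp} {τ : CGTy L} (h : CGTyped Γ e τ) :
    ∀ Γ1, Γ = Γ1 ++ Γ2 → CGTyped (Γ1 ++ σ :: Γ2) (e.shift Γ1.length) τ := by
  induction h with
  | @var Γ n τ h =>
    rintro Γ1 rfl
    simp only [Exp.shift]
    split_ifs with hn
    · exact .var (by rwa [List.getElem?_append_left hn] at h ⊢)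
    · refine .var ?_
      rw [List.getElem?_append_right (by omega)] at h ⊢
      rwa [show n + 1 - Γ1.length = (n - Γ1.length) + 1 by omega, List.getElem?_cons_succ]
  | tt => intros; exact .tt
  | ff => intros; exact .ff
  | unit => intros; exact .unit
  | lam _ ih => rintro Γ1 rfl; exact .lam (ih (_ :: Γ1) rfl)
  | app _ _ ih1 ih2 => intro Γ1 hΓ; exact .app (ih1 Γ1 hΓ) (ih2 Γ1 hΓ)
  | pair _ _ ih1 ih2 => intro Γ1 hΓ; exact .pair (ih1 Γ1 hΓ) (ih2 Γ1 hΓ)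
  | fst _ ih => intro Γ1 hΓ; exact .fst (ih Γ1 hΓ)
  | snd _ ih => intro Γ1 hΓ; exact .snd (ih Γ1 hΓ)
  | inl _ ih => intro Γ1 hΓ; exact .inl (ih Γ1 hΓ)
  | inr _ ih => intro Γ1 hΓ; exact .inr (ih Γ1 hΓ)
  | case _ _ _ ih ih1 ih2 =>
    rintro Γ1 rfl; exact .case (ih Γ1 rfl) (ih1 (_ :: Γ1) rfl) (ih2 (_ :: Γ1) rfl)
  | ret _ ih => intro Γ1 hΓ; exact .ret (ih Γ1 hΓ)
  | bind _ _ a b c d ih1 ih2 =>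
    rintro Γ1 rfl; exact .bind (ih1 Γ1 rfl) (ih2 (_ :: Γ1) rfl) a b c d
  | label _ ih => intro Γ1 hΓ; exact .label (ih Γ1 hΓ)
  | unlabel _ ih => intro Γ1 hΓ; exact .unlabel (ih Γ1 hΓ)
  | new _ ih => intro Γ1 hΓ; exact .new (ih Γ1 hΓ)
  | deref _ ih => intro Γ1 hΓ; exact .deref (ih Γ1 hΓ)
  | assign _ _ ih1 ih2 => intro Γ1 hΓ; exact .assign (ih1 Γ1 hΓ) (ih2 Γ1 hΓ)
  | toLabeled _ ih => intro Γ1 hΓ; exact .toLabeled (ih Γ1 hΓ)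
  | sub _ hs ih => intro Γ1 hΓ; exact .sub (ih Γ1 hΓ) hs

theorem FGSub.lab_le {L : Type} [Lattice L] [BoundedOrder L] {τ τ' : FGTy L}
    (h : FGSub τ τ') : τ.lab ≤ τ'.lab := by
  cases h <;> assumption

theorem FGSub.trA {L : Type} [Lattice L] [BoundedOrder L] {τ τ' : FGTy L}
    (h : FGSub τ τ') : CGSub (trA τ) (trA τ') := by
  induction h with
  | bool => exact .bool
  | unit => exact .unit
  | fn h1 hl h2 _ ih1 ih2 =>
    exact .fn (.labeled ih1 h1.lab_le) (.monad hl le_rfl (.labeled ih2 h2.lab_le))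
  | prod h1 h2 _ ih1 ih2 => exact .prod (.labeled ih1 h1.lab_le) (.labeled ih2 h2.lab_le)
  | sum h1 h2 _ ih1 ih2 => exact .sum (.labeled ih1 h1.lab_le) (.labeled ih2 h2.lab_le)
  | ref => exact .ref

theorem FGSub.toCG {L : Type} [Lattice L] [BoundedOrder L] {τ τ' : FGTy L}
    (h : FGSub τ τ') : CGSub (toCG τ) (toCG τ') := .labeled h.trA h.lab_le

/-- Subsumption specialised to the labels and the result type of a monadic type. -/
theorem CGTyped.monadSub {L : Type} [Lattice L] [BoundedOrder L] {Γ : List (CGTy L)} {e : Exp}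
    {l1 l2 l1' l2' : L} {τ τ' : CGTy L} (h : CGTyped Γ e (.monad l1 l2 τ))
    (a : l1' ≤ l1) (b : l2 ≤ l2') (c : CGSub τ τ' := by exact CGSub.refl _) :
    CGTyped Γ e (.monad l1' l2' τ') := .sub h (.monad a b c)

/-- `coerceTaint` absorbs a taint `l` into the label of the result it already protects. -/
theorem CGTyped.coerceTaint {L : Type} [Lattice L] [BoundedOrder L] {Γ : List (CGTy L)} {e : Exp}
    {pc l l' : L} {τ : CGTy L} (h : CGTyped Γ e (.monad pc l (.labeled l' τ))) (hl : l ≤ l') :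
    CGTyped Γ (.app coerceTaint e) (.monad pc ⊥ (.labeled l' τ)) :=
  .app (.lam (.toLabeled (.bind (.var rfl) (.unlabel (.var rfl)) le_rfl le_top le_top hl))) h

theorem FG2CG.typed {L : Type} [Lattice L] [BoundedOrder L] {Γ : List (FGTy L)} {pc : L}
    {e ec : Exp} {τ : FGTy L} (h : FG2CG Γ pc e τ ec) :
    CGTyped (Γ.map toCG) ec (.monad pc ⊥ (toCG τ)) := by
  induction h with
  | @var Γ n τ _ h =>
    exact (CGTyped.ret (.var (τ := toCG τ) (by simp [h]))).monadSub le_top le_rfl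
  | tt => exact (CGTyped.ret (.label .tt)).monadSub le_top le_rfl
  | ff => exact (CGTyped.ret (.label .ff)).monadSub le_top le_rfl
  | unit => exact (CGTyped.ret (.label .unit)).monadSub le_top le_rfl
  | lam _ ih => exact (CGTyped.ret (.label (.lam ih))).monadSub le_top le_rfl
  | app _ _ h1 h2 ih1 ih2 =>
    refine CGTyped.coerceTaint (.bind ih1 (.bind (ih2.shift _ [] rfl) (.bind (.unlabel (.var rfl))
      (CGTyped.monadSub (.app (.var rfl) (.var rfl)) le_rfl bot_le) le_top
      (le_sup_right.trans h1) (le_sup_left.trans h1) le_rfl)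
      le_rfl le_rfl bot_le bot_le) le_rfl le_rfl bot_le bot_le) h2
  | pair _ _ ih1 ih2 =>
    exact .bind ih1 (.bind (ih2.shift _ [] rfl)
      (.ret (.label (.pair (.var rfl) (.var rfl))))
      le_rfl le_top bot_le bot_le) le_rfl le_rfl bot_le bot_le
  | fst _ h2 ih =>
    exact CGTyped.coerceTaint (.bind ih (.bind (.unlabel (.var rfl))
      (CGTyped.monadSub (.ret (.fst (.var rfl))) le_rfl bot_le) le_top le_top le_top le_rfl)
      le_rfl le_rfl bot_le bot_le) h2
  | snd _ h2 ih =>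
    exact CGTyped.coerceTaint (.bind ih (.bind (.unlabel (.var rfl))
      (CGTyped.monadSub (.ret (.snd (.var rfl))) le_rfl bot_le) le_top le_top le_top le_rfl)
      le_rfl le_rfl bot_le bot_le) h2
  | inl _ ih =>
    exact .bind ih (.ret (.label (.inl (.var rfl)))) le_rfl le_top bot_le bot_le
  | inr _ ih =>
    exact .bind ih (.ret (.label (.inr (.var rfl)))) le_rfl le_top bot_le bot_le
  | case _ _ _ h2 ih ih1 ih2 =>
    exact CGTyped.coerceTaint (.bind ih (.bind (.unlabel (.var rfl))
      (CGTyped.monadSub (.case (.var rfl)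
        ((ih1.shift _ [_] rfl).shift _ [_] rfl) ((ih2.shift _ [_] rfl).shift _ [_] rfl))
        le_rfl bot_le) le_top le_sup_left le_sup_right le_rfl)
      le_rfl le_rfl bot_le bot_le) h2
  | new _ h2 ih =>
    exact .bind ih (.bind (.new (.var rfl)) (.ret (.label (.var rfl)))
      h2 le_top bot_le bot_le) le_rfl le_rfl bot_le bot_le
  | deref _ hs h2 ih =>
    exact CGTyped.coerceTaint (.bind ih (.bind (.unlabel (.var rfl))
      (CGTyped.monadSub (.deref (.var rfl)) le_rfl bot_le hs.toCG) le_top le_top le_top le_rfl)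
      le_rfl le_rfl bot_le bot_le) h2
  | assign _ _ h2 ih1 ih2 =>
    exact .bind (.toLabeled (.bind ih1 (.bind (ih2.shift _ [] rfl) (.bind (.unlabel (.var rfl))
      (CGTyped.monadSub (.assign (.var rfl) (.var rfl)) le_rfl bot_le) le_top
      (le_sup_left.trans h2) (le_sup_right.trans h2) le_rfl)
      le_rfl le_rfl bot_le bot_le) le_rfl le_rfl bot_le bot_le))
      (.ret (.label .unit)) le_rfl le_top bot_le bot_le
  | sub _ hs hpc ih => exact ih.monadSub hpc le_rfl hs.toCG

/-! ### Unary typing of run-time terms -/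

/-- Typing of CG run-time terms relative to a store typing `Ψ`, which assigns to the location
`n` the type `ref l τ` when `Ψ[n]? = some (l, τ)`.  Subsumption is built into every rule, so that
inversion is a mere case distinction. -/
inductive CT {L : Type} [Lattice L] [BoundedOrder L] (Ψ : List (L × CGTy L)) :
    List (CGTy L) → Exp → CGTy L → Prop where
  | var : Γ[n]? = some τ' → CGSub τ' τ → CT Ψ Γ (.var n) τ
  | tt : CGSub .bool τ → CT Ψ Γ .tt τ
  | ff : CGSub .bool τ → CT Ψ Γ .ff τ
  | unit : CGSub .unit τ → CT Ψ Γ .unit τ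
  | loc : Ψ[n]? = some (l, τ') → CGSub (.ref l τ') τ → CT Ψ Γ (.loc n) τ
  | lam : CT Ψ (τ1 :: Γ) e τ2 → CGSub (.fn τ1 τ2) τ → CT Ψ Γ (.lam e) τ
  | app : CT Ψ Γ e1 (.fn τ1 τ2) → CT Ψ Γ e2 τ1 → CGSub τ2 τ → CT Ψ Γ (.app e1 e2) τ
  | pair : CT Ψ Γ e1 τ1 → CT Ψ Γ e2 τ2 → CGSub (.prod τ1 τ2) τ → CT Ψ Γ (.pair e1 e2) τ
  | fst : CT Ψ Γ e (.prod τ1 τ2) → CGSub τ1 τ → CT Ψ Γ (.fst e) τ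
  | snd : CT Ψ Γ e (.prod τ1 τ2) → CGSub τ2 τ → CT Ψ Γ (.snd e) τ
  | inl : CT Ψ Γ e τ1 → CGSub (.sum τ1 τ2) τ → CT Ψ Γ (.inl e) τ
  | inr : CT Ψ Γ e τ2 → CGSub (.sum τ1 τ2) τ → CT Ψ Γ (.inr e) τ
  | case : CT Ψ Γ e (.sum τ1 τ2) → CT Ψ (τ1 :: Γ) e1 τ' → CT Ψ (τ2 :: Γ) e2 τ' →
      CGSub τ' τ → CT Ψ Γ (.case e e1 e2) τ
  | ret : CT Ψ Γ e τ' → CGSub (.monad ⊤ ⊥ τ') τ → CT Ψ Γ (.ret e) τ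
  | bind : CT Ψ Γ e1 (.monad l1 l2 τ1) → CT Ψ (τ1 :: Γ) e2 (.monad l3 l4 τ2) →
      l ≤ l1 → l ≤ l3 → l2 ≤ l3 → l2 ≤ l4 → CGSub (.monad l l4 τ2) τ → CT Ψ Γ (.bind e1 e2) τ
  | label : CT Ψ Γ e τ' → CGSub (.labeled l τ') τ → CT Ψ Γ (.label e) τ
  | unlabel : CT Ψ Γ e (.labeled l τ') → CGSub (.monad ⊤ l τ') τ → CT Ψ Γ (.unlabel e) τ
  | new : CT Ψ Γ e (.labeled l τ') → CGSub (.monad l ⊥ (.ref l τ')) τ → CT Ψ Γ (.new e) τ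
  | deref : CT Ψ Γ e (.ref l τ') → CGSub (.monad ⊤ ⊥ (.labeled l τ')) τ → CT Ψ Γ (.deref e) τ
  | assign : CT Ψ Γ e1 (.ref l τ') → CT Ψ Γ e2 (.labeled l τ') → CGSub (.monad l ⊥ .unit) τ →
      CT Ψ Γ (.assign e1 e2) τ
  | toLabeled : CT Ψ Γ e (.monad l l' τ') → CGSub (.monad l ⊥ (.labeled l' τ')) τ →
      CT Ψ Γ (.toLabeled e) τ

/-- The store typing `Ψ'` extends `Ψ`. -/
def StoreExt {L : Type} (Ψ Ψ' : List (L × CGTy L)) : Prop := ∀ (n : ℕ) p, Ψ[n]? = some p → Ψ'[n]? = some p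

theorem StoreExt.refl {L : Type} (Ψ : List (L × CGTy L)) : StoreExt Ψ Ψ := fun _ _ h => h

theorem StoreExt.trans {L : Type} {Ψ1 Ψ2 Ψ3 : List (L × CGTy L)} (a : StoreExt Ψ1 Ψ2) (b : StoreExt Ψ2 Ψ3) :
    StoreExt Ψ1 Ψ3 :=
  fun n p h => b n p (a n p h)

theorem StoreExt.append {L : Type} (Ψ : List (L × CGTy L)) (p : L × CGTy L) :
    StoreExt Ψ (Ψ ++ [p]) := by
  intro n q h
  have hn : n < Ψ.length := by
    by_contra hn
    rw [List.getElem?_eq_none (by omega)] at h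
    exact absurd h (by simp)
  rwa [List.getElem?_append_left hn]

section Unary

variable {L : Type} [Lattice L] [BoundedOrder L] {Ψ Ψ' : List (L × CGTy L)}
  {Γ : List (CGTy L)} {e v : Exp} {σ τ τ' : CGTy L}

theorem CT.sub (h : CT Ψ Γ e τ') (hs : CGSub τ' τ) : CT Ψ Γ e τ := by
  cases h with
  | var a b => exact .var a (b.trans hs)
  | tt b => exact .tt (b.trans hs)
  | ff b => exact .ff (b.trans hs)
  | unit b => exact .unit (b.trans hs)
  | loc a b => exact .loc a (b.trans hs)
  | lam a b => exact .lam a (b.trans hs)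
  | app a a' b => exact .app a a' (b.trans hs)
  | pair a a' b => exact .pair a a' (b.trans hs)
  | fst a b => exact .fst a (b.trans hs)
  | snd a b => exact .snd a (b.trans hs)
  | inl a b => exact .inl a (b.trans hs)
  | inr a b => exact .inr a (b.trans hs)
  | case a a1 a2 b => exact .case a a1 a2 (b.trans hs)
  | ret a b => exact .ret a (b.trans hs)
  | bind a a' c1 c2 c3 c4 b => exact .bind a a' c1 c2 c3 c4 (b.trans hs)
  | label a b => exact .label a (b.trans hs)
  | unlabel a b => exact .unlabel a (b.trans hs)
  | new a b => exact .new a (b.trans hs)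
  | deref a b => exact .deref a (b.trans hs)
  | assign a a' b => exact .assign a a' (b.trans hs)
  | toLabeled a b => exact .toLabeled a (b.trans hs)

theorem CGTyped.toCT (Ψ : List (L × CGTy L)) (h : CGTyped Γ e τ) : CT Ψ Γ e τ := by
  induction h with
  | var a => exact .var a (.refl _)
  | tt => exact .tt (.refl _)
  | ff => exact .ff (.refl _)
  | unit => exact .unit (.refl _)
  | lam _ a => exact .lam a (.refl _)
  | app _ _ a a' => exact .app a a' (.refl _)
  | pair _ _ a a' => exact .pair a a' (.refl _)
  | fst _ a => exact .fst a (.refl _)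
  | snd _ a => exact .snd a (.refl _)
  | inl _ a => exact .inl a (.refl _)
  | inr _ a => exact .inr a (.refl _)
  | case _ _ _ a a1 a2 => exact .case a a1 a2 (.refl _)
  | ret _ a => exact .ret a (.refl _)
  | bind _ _ c1 c2 c3 c4 a a' => exact .bind a a' c1 c2 c3 c4 (.refl _)
  | label _ a => exact .label a (.refl _)
  | unlabel _ a => exact .unlabel a (.refl _)
  | new _ a => exact .new a (.refl _)
  | deref _ a => exact .deref a (.refl _)
  | assign _ _ a a' => exact .assign a a' (.refl _)
  | toLabeled _ a => exact .toLabeled a (.refl _)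
  | sub _ hs a => exact a.sub hs

/-- Weakening, both of the store typing and at the end of the context. -/
theorem CT.weaken (hΨ : StoreExt Ψ Ψ') (Δ : List (CGTy L)) (h : CT Ψ Γ e τ) :
    CT Ψ' (Γ ++ Δ) e τ := by
  induction h with
  | @var Γ n _ _ a b =>
    refine .var ?_ b
    rw [List.getElem?_append_left, a]
    by_contra hn
    rw [List.getElem?_eq_none (by omega)] at a
    exact absurd a (by simp)
  | tt b => exact .tt b
  | ff b => exact .ff b
  | unit b => exact .unit b
  | loc a b => exact .loc (hΨ _ _ a) b
  | lam _ b a => exact .lam a b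
  | app _ _ b a a' => exact .app a a' b
  | pair _ _ b a a' => exact .pair a a' b
  | fst _ b a => exact .fst a b
  | snd _ b a => exact .snd a b
  | inl _ b a => exact .inl a b
  | inr _ b a => exact .inr a b
  | case _ _ _ b a a1 a2 => exact .case a a1 a2 b
  | ret _ b a => exact .ret a b
  | bind _ _ c1 c2 c3 c4 b a a' => exact .bind a a' c1 c2 c3 c4 b
  | label _ b a => exact .label a b
  | unlabel _ b a => exact .unlabel a b
  | new _ b a => exact .new a b
  | deref _ b a => exact .deref a b
  | assign _ _ b a a' => exact .assign a a' b
  | toLabeled _ b a => exact .toLabeled a b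

theorem CT.mono (hΨ : StoreExt Ψ Ψ') (h : CT Ψ Γ e τ) : CT Ψ' Γ e τ := by
  simpa using h.weaken hΨ []

theorem CT.shift_eq (h : CT Ψ Γ e τ) : ∀ c, Γ.length ≤ c → e.shift c = e := by
  induction h with
  | @var Γ n _ _ a b =>
    intro c hc
    have hn : n < Γ.length := by
      by_contra hn
      rw [List.getElem?_eq_none (by omega)] at a
      exact absurd a (by simp)
    simp [Exp.shift, show n < c by omega]
  | _ => intro c hc; simp_all [Exp.shift]

theorem CT.subst_aux {Γ2 : List (CGTy L)} (hv : CT Ψ [] v σ) (h : CT Ψ Γ e τ) :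
    ∀ Γ1, Γ = Γ1 ++ σ :: Γ2 → CT Ψ (Γ1 ++ Γ2) (e.subst v Γ1.length) τ := by
  have hsh : v.shift 0 = v := hv.shift_eq 0 le_rfl
  induction h with
  | @var Γ n τ' τ a b =>
    rintro Γ1 rfl
    simp only [Exp.subst]
    split_ifs with h1 h2
    · subst h1
      simp only [List.getElem?_append_right le_rfl, Nat.sub_self, List.getElem?_cons_zero,
        Option.some.injEq] at a
      subst a
      simpa using (hv.sub b).weaken (.refl _) (Γ1 ++ Γ2)
    · refine .var ?_ b
      rw [List.getElem?_append_right (by omega)] at a ⊢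
      rwa [show n - Γ1.length = (n - 1 - Γ1.length) + 1 by omega, List.getElem?_cons_succ] at a
    · exact .var (by rwa [List.getElem?_append_left (by omega)] at a ⊢) b
  | tt b => intros; exact .tt b
  | ff b => intros; exact .ff b
  | unit b => intros; exact .unit b
  | loc a b => intros; exact .loc a b
  | lam _ b a =>
    rintro Γ1 rfl; simp only [Exp.subst, hsh]; exact .lam (a (_ :: Γ1) rfl) b
  | app _ _ b a a' => intro Γ1 h; exact .app (a Γ1 h) (a' Γ1 h) b
  | pair _ _ b a a' => intro Γ1 h; exact .pair (a Γ1 h) (a' Γ1 h) b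
  | fst _ b a => intro Γ1 h; exact .fst (a Γ1 h) b
  | snd _ b a => intro Γ1 h; exact .snd (a Γ1 h) b
  | inl _ b a => intro Γ1 h; exact .inl (a Γ1 h) b
  | inr _ b a => intro Γ1 h; exact .inr (a Γ1 h) b
  | case _ _ _ b a a1 a2 =>
    rintro Γ1 rfl; simp only [Exp.subst, hsh]
    exact .case (a Γ1 rfl) (a1 (_ :: Γ1) rfl) (a2 (_ :: Γ1) rfl) b
  | ret _ b a => intro Γ1 h; exact .ret (a Γ1 h) b
  | bind _ _ c1 c2 c3 c4 b a a' =>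
    rintro Γ1 rfl; simp only [Exp.subst, hsh]
    exact .bind (a Γ1 rfl) (a' (_ :: Γ1) rfl) c1 c2 c3 c4 b
  | label _ b a => intro Γ1 h; exact .label (a Γ1 h) b
  | unlabel _ b a => intro Γ1 h; exact .unlabel (a Γ1 h) b
  | new _ b a => intro Γ1 h; exact .new (a Γ1 h) b
  | deref _ b a => intro Γ1 h; exact .deref (a Γ1 h) b
  | assign _ _ b a a' => intro Γ1 h; exact .assign (a Γ1 h) (a' Γ1 h) b
  | toLabeled _ b a => intro Γ1 h; exact .toLabeled (a Γ1 h) b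

theorem CT.subst (h : CT Ψ [σ] e τ) (hv : CT Ψ [] v σ) : CT Ψ [] (e.subst v 0) τ :=
  CT.subst_aux hv h [] rfl

/-- Subject reduction for pure evaluation. -/
theorem CT.pure (hp : CGPure e v) : ∀ {τ : CGTy L}, CT Ψ [] e τ → CT Ψ [] v τ := by
  induction hp with
  | app _ _ _ ih1 ih2 ih3 =>
    rintro τ (_ | _)
    rename_i a1 a2 hs
    cases ih1 a1 with | lam b hb => cases hb with | fn hb1 hb2 =>
      exact (ih3 (b.subst ((ih2 a2).sub hb1))).sub (hb2.trans hs)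
  | pair _ _ ih1 ih2 =>
    intro τ h; cases h with | pair a a' b => exact .pair (ih1 a) (ih2 a') b
  | fst _ ih =>
    intro τ h; cases h with | fst a b =>
      cases ih a with | pair c c' d => cases d with | prod d1 d2 => exact c.sub (d1.trans b)
  | snd _ ih =>
    intro τ h; cases h with | snd a b =>
      cases ih a with | pair c c' d => cases d with | prod d1 d2 => exact c'.sub (d2.trans b)
  | inl _ ih => intro τ h; cases h with | inl a b => exact .inl (ih a) b
  | inr _ ih => intro τ h; cases h with | inr a b => exact .inr (ih a) b
  | caseL _ _ ih1 ih2 =>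
    intro τ h; cases h with | case a a1 a2 b =>
      cases ih1 a with | inl c d => cases d with | sum d1 d2 =>
        exact (ih2 (a1.subst (c.sub d1))).sub b
  | caseR _ _ ih1 ih2 =>
    intro τ h; cases h with | case a a1 a2 b =>
      cases ih1 a with | inr c d => cases d with | sum d1 d2 =>
        exact (ih2 (a2.subst (c.sub d2))).sub b
  | label _ ih => intro τ h; cases h with | label a b => exact .label (ih a) b
  | _ => exact fun h => h

/-- The heap `h` conforms to the store typing `Ψ`. -/
def HT (Ψ : List (L × CGTy L)) (h : Heap) : Prop :=
  h.length = Ψ.length ∧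
    ∀ (n : ℕ) (l : L) (τ : CGTy L) (v : Exp), Ψ[n]? = some (l, τ) → h[n]? = some v → CT Ψ [] v (.labeled l τ)

theorem HT.append {l : L} {h : Heap} (hh : HT Ψ h) (hv : CT Ψ [] v (.labeled l τ)) :
    HT (Ψ ++ [(l, τ)]) (h ++ [v]) := by
  refine ⟨by simp [hh.1], fun n l' τ' w h1 h2 => ?_⟩
  rcases lt_or_ge n Ψ.length with hn | hn
  · rw [List.getElem?_append_left hn] at h1
    rw [List.getElem?_append_left (hh.1 ▸ hn)] at h2
    exact (hh.2 _ _ _ _ h1 h2).mono (.append _ _)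
  · have hn' : n = Ψ.length := by
      by_contra hne
      rw [List.getElem?_eq_none (by simp; omega)] at h1
      exact absurd h1 (by simp)
    subst hn'
    simp at h1
    rw [← hh.1] at h2
    simp at h2
    obtain ⟨rfl, rfl⟩ := h1
    subst h2
    exact hv.mono (.append _ _)

theorem HT.set {l : L} {h : Heap} {n : ℕ} (hh : HT Ψ h) (hn : Ψ[n]? = some (l, τ))
    (hv : CT Ψ [] v (.labeled l τ)) : HT Ψ (h.set n v) := by
  refine ⟨by simp [hh.1], fun m l' τ' w h1 h2 => ?_⟩
  rw [List.getElem?_set] at h2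
  split_ifs at h2 with hm hl
  · subst hm
    rw [hn] at h1
    cases h1; cases h2
    exact hv
  · exact hh.2 _ _ _ _ h1 h2

/-- Subject reduction for forcing, together with confinement: a computation with pc-label `l1`
leaves every location whose label is not above `l1` untouched. -/
theorem CT.force {h h' : Heap} (hf : CGForce h e h' v) :
    ∀ {Ψ : List (L × CGTy L)} {l1 l2 : L} {τ : CGTy L}, CT Ψ [] e (.monad l1 l2 τ) → HT Ψ h →
      ∃ Ψ', StoreExt Ψ Ψ' ∧ HT Ψ' h' ∧ CT Ψ' [] v τ ∧
        ∀ (n : ℕ) l σ, Ψ[n]? = some (l, σ) → ¬ l1 ≤ l → h'[n]? = h[n]? := by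
  induction hf with
  | ret p1 p2 =>
    intro Ψ l1 l2 τ ht hh
    cases ht.pure p1 with | ret a b => cases b with | monad b1 b2 b3 =>
      exact ⟨Ψ, .refl _, hh, (a.pure p2).sub b3, fun _ _ _ _ _ => rfl⟩
  | bind p1 _ _ ih1 ih2 =>
    intro Ψ l1 l2 τ ht hh
    cases ht.pure p1 with | bind a a' c1 c2 c3 c4 b => cases b with | monad b1 b2 b3 =>
      obtain ⟨Ψ1, x1, hh1, t1, u1⟩ := ih1 a hh
      obtain ⟨Ψ2, x2, hh2, t2, u2⟩ := ih2 ((a'.mono x1).subst t1) hh1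
      refine ⟨Ψ2, x1.trans x2, hh2, t2.sub b3, fun n l σ hn hl => ?_⟩
      rw [u2 n l σ (x1 _ _ hn) fun hc => hl (b1.trans (c2.trans hc)),
        u1 n l σ hn fun hc => hl (b1.trans (c1.trans hc))]
  | unlabel p1 p2 =>
    intro Ψ l1 l2 τ ht hh
    cases ht.pure p1 with | unlabel a b => cases b with | monad b1 b2 b3 =>
      cases a.pure p2 with | label c d => cases d with | labeled d1 d2 =>
        exact ⟨Ψ, .refl _, hh, c.sub (d1.trans b3), fun _ _ _ _ _ => rfl⟩
  | toLabeled p1 _ ih =>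
    intro Ψ l1 l2 τ ht hh
    cases ht.pure p1 with | toLabeled a b => cases b with | monad b1 b2 b3 =>
      obtain ⟨Ψ1, x1, hh1, t1, u1⟩ := ih a hh
      exact ⟨Ψ1, x1, hh1, .label t1 b3, fun n l σ hn hl => u1 n l σ hn fun hc => hl (b1.trans hc)⟩
  | @new e e0 v h p1 p2 =>
    intro Ψ l1 l2 τ ht hh
    cases ht.pure p1 with | new a b => cases b with | monad b1 b2 b3 =>
      refine ⟨_, .append _ _, hh.append (a.pure p2), .loc (by rw [hh.1]; simp) b3,
        fun n l σ hn hl => ?_⟩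
      rw [List.getElem?_append_left]
      by_contra hc
      rw [List.getElem?_eq_none (by rw [← hh.1]; omega)] at hn
      exact absurd hn (by simp)
  | deref p1 p2 p3 =>
    intro Ψ l1 l2 τ ht hh
    cases ht.pure p1 with | deref a b => cases b with | monad b1 b2 b3 =>
      cases a.pure p2 with | loc c d =>
        cases d
        exact ⟨Ψ, .refl _, hh, (hh.2 _ _ _ _ c p3).sub b3, fun _ _ _ _ _ => rfl⟩
  | assign p1 p2 p3 =>
    intro Ψ l1 l2 τ ht hh
    cases ht.pure p1 with | assign a a' b => cases b with | monad b1 b2 b3 =>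
      cases a.pure p2 with | loc c d =>
        cases d
        refine ⟨Ψ, .refl _, hh.set c (a'.pure p3), .unit b3, fun n l σ hn hl => ?_⟩
        rw [List.getElem?_set_ne]
        rintro rfl
        rw [c] at hn
        cases hn
        exact hl b1

end Unary

/-! ### Values -/

theorem CGPure.val {e v : Exp} (h : CGPure e v) : CGVal v := by
  induction h with
  | pair _ _ a b => exact .pair a b
  | fst _ a => cases a; assumption
  | snd _ a => cases a; assumption
  | inl _ a => exact .inl a
  | inr _ a => exact .inr a
  | label _ a => exact .label a
  | app _ _ _ _ _ a => exact a
  | caseL _ _ _ a => exact a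
  | caseR _ _ _ a => exact a
  | _ => constructor

theorem CGForce.val {h h' : Heap} {e v : Exp} (hf : CGForce h e h' v) (hh : ∀ w ∈ h, CGVal w) :
    (∀ w ∈ h', CGVal w) ∧ CGVal v := by
  induction hf with
  | ret _ p => exact ⟨hh, p.val⟩
  | bind _ _ _ ih1 ih2 => exact ih2 (ih1 hh).1
  | unlabel _ p => cases p.val; exact ⟨hh, by assumption⟩
  | toLabeled _ _ ih => exact ⟨(ih hh).1, .label (ih hh).2⟩
  | new _ p =>
    refine ⟨fun w hw => ?_, .loc⟩
    rcases List.mem_append.1 hw with hw | hw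
    · exact hh w hw
    · rw [List.mem_singleton.1 hw]; exact p.val
  | deref _ _ p => exact ⟨hh, hh _ (List.mem_of_getElem? p)⟩
  | assign _ _ p =>
    refine ⟨fun w hw => ?_, .unit⟩
    rcases List.mem_or_eq_of_mem_set hw with hw | rfl
    · exact hh w hw
    · exact p.val

/-! ### Indistinguishability -/

/-- Typed indistinguishability of two run-time terms for an adversary at level `A`.  The terms have
the same shape, except that (rule `high`) any two well-typed terms of type `labeled l τ` are related
when the adversary may not see `l`.  The two runs have their own store typings `Ψ1` and `Ψ2`, and
`β` matches the locations of the first run with those of the second.  As in `CT`, subsumption is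
built into the rules. -/
inductive CR {L : Type} [Lattice L] [BoundedOrder L] (A : L) (Ψ1 Ψ2 : List (L × CGTy L))
    (β : ℕ → ℕ → Prop) : List (CGTy L) → Exp → Exp → CGTy L → Prop where
  | high : ¬ l ≤ A → CT Ψ1 Γ e (.labeled l τ') → CT Ψ2 Γ f (.labeled l τ') →
      CGSub (.labeled l τ') τ → CR A Ψ1 Ψ2 β Γ e f τ
  | var : Γ[n]? = some τ' → CGSub τ' τ → CR A Ψ1 Ψ2 β Γ (.var n) (.var n) τ
  | tt : CGSub .bool τ → CR A Ψ1 Ψ2 β Γ .tt .tt τ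
  | ff : CGSub .bool τ → CR A Ψ1 Ψ2 β Γ .ff .ff τ
  | unit : CGSub .unit τ → CR A Ψ1 Ψ2 β Γ .unit .unit τ
  | loc : β n m → Ψ1[n]? = some (l, τ') → Ψ2[m]? = some (l, τ') → CGSub (.ref l τ') τ →
      CR A Ψ1 Ψ2 β Γ (.loc n) (.loc m) τ
  | lam : CR A Ψ1 Ψ2 β (τ1 :: Γ) e f τ2 → CGSub (.fn τ1 τ2) τ →
      CR A Ψ1 Ψ2 β Γ (.lam e) (.lam f) τ
  | app : CR A Ψ1 Ψ2 β Γ e1 f1 (.fn τ1 τ2) → CR A Ψ1 Ψ2 β Γ e2 f2 τ1 → CGSub τ2 τ →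
      CR A Ψ1 Ψ2 β Γ (.app e1 e2) (.app f1 f2) τ
  | pair : CR A Ψ1 Ψ2 β Γ e1 f1 τ1 → CR A Ψ1 Ψ2 β Γ e2 f2 τ2 → CGSub (.prod τ1 τ2) τ →
      CR A Ψ1 Ψ2 β Γ (.pair e1 e2) (.pair f1 f2) τ
  | fst : CR A Ψ1 Ψ2 β Γ e f (.prod τ1 τ2) → CGSub τ1 τ → CR A Ψ1 Ψ2 β Γ (.fst e) (.fst f) τ
  | snd : CR A Ψ1 Ψ2 β Γ e f (.prod τ1 τ2) → CGSub τ2 τ → CR A Ψ1 Ψ2 β Γ (.snd e) (.snd f) τ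
  | inl : CR A Ψ1 Ψ2 β Γ e f τ1 → CGSub (.sum τ1 τ2) τ → CR A Ψ1 Ψ2 β Γ (.inl e) (.inl f) τ
  | inr : CR A Ψ1 Ψ2 β Γ e f τ2 → CGSub (.sum τ1 τ2) τ → CR A Ψ1 Ψ2 β Γ (.inr e) (.inr f) τ
  | case : CR A Ψ1 Ψ2 β Γ e f (.sum τ1 τ2) → CR A Ψ1 Ψ2 β (τ1 :: Γ) e1 f1 τ' →
      CR A Ψ1 Ψ2 β (τ2 :: Γ) e2 f2 τ' → CGSub τ' τ →
      CR A Ψ1 Ψ2 β Γ (.case e e1 e2) (.case f f1 f2) τ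
  | ret : CR A Ψ1 Ψ2 β Γ e f τ' → CGSub (.monad ⊤ ⊥ τ') τ → CR A Ψ1 Ψ2 β Γ (.ret e) (.ret f) τ
  | bind : CR A Ψ1 Ψ2 β Γ e1 f1 (.monad l1 l2 τ1) →
      CR A Ψ1 Ψ2 β (τ1 :: Γ) e2 f2 (.monad l3 l4 τ2) →
      l ≤ l1 → l ≤ l3 → l2 ≤ l3 → l2 ≤ l4 → CGSub (.monad l l4 τ2) τ →
      CR A Ψ1 Ψ2 β Γ (.bind e1 e2) (.bind f1 f2) τ
  | label : CR A Ψ1 Ψ2 β Γ e f τ' → CGSub (.labeled l τ') τ →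
      CR A Ψ1 Ψ2 β Γ (.label e) (.label f) τ
  | unlabel : CR A Ψ1 Ψ2 β Γ e f (.labeled l τ') → CGSub (.monad ⊤ l τ') τ →
      CR A Ψ1 Ψ2 β Γ (.unlabel e) (.unlabel f) τ
  | new : CR A Ψ1 Ψ2 β Γ e f (.labeled l τ') → CGSub (.monad l ⊥ (.ref l τ')) τ →
      CR A Ψ1 Ψ2 β Γ (.new e) (.new f) τ
  | deref : CR A Ψ1 Ψ2 β Γ e f (.ref l τ') → CGSub (.monad ⊤ ⊥ (.labeled l τ')) τ →
      CR A Ψ1 Ψ2 β Γ (.deref e) (.deref f) τ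
  | assign : CR A Ψ1 Ψ2 β Γ e1 f1 (.ref l τ') → CR A Ψ1 Ψ2 β Γ e2 f2 (.labeled l τ') →
      CGSub (.monad l ⊥ .unit) τ → CR A Ψ1 Ψ2 β Γ (.assign e1 e2) (.assign f1 f2) τ
  | toLabeled : CR A Ψ1 Ψ2 β Γ e f (.monad l l' τ') → CGSub (.monad l ⊥ (.labeled l' τ')) τ →
      CR A Ψ1 Ψ2 β Γ (.toLabeled e) (.toLabeled f) τ

section Binary

variable {L : Type} [Lattice L] [BoundedOrder L] {A : L} {Ψ1 Ψ2 Ψ1' Ψ2' : List (L × CGTy L)}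
  {β β' : ℕ → ℕ → Prop} {Γ : List (CGTy L)} {e f v w : Exp} {σ τ τ' : CGTy L}

theorem CR.sub (h : CR A Ψ1 Ψ2 β Γ e f τ') (hs : CGSub τ' τ) : CR A Ψ1 Ψ2 β Γ e f τ := by
  cases h with
  | high c a a' b => exact .high c a a' (b.trans hs)
  | var a b => exact .var a (b.trans hs)
  | tt b => exact .tt (b.trans hs)
  | ff b => exact .ff (b.trans hs)
  | unit b => exact .unit (b.trans hs)
  | loc a1 a2 a3 b => exact .loc a1 a2 a3 (b.trans hs)
  | lam a b => exact .lam a (b.trans hs)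
  | app a a' b => exact .app a a' (b.trans hs)
  | pair a a' b => exact .pair a a' (b.trans hs)
  | fst a b => exact .fst a (b.trans hs)
  | snd a b => exact .snd a (b.trans hs)
  | inl a b => exact .inl a (b.trans hs)
  | inr a b => exact .inr a (b.trans hs)
  | case a a1 a2 b => exact .case a a1 a2 (b.trans hs)
  | ret a b => exact .ret a (b.trans hs)
  | bind a a' c1 c2 c3 c4 b => exact .bind a a' c1 c2 c3 c4 (b.trans hs)
  | label a b => exact .label a (b.trans hs)
  | unlabel a b => exact .unlabel a (b.trans hs)
  | new a b => exact .new a (b.trans hs)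
  | deref a b => exact .deref a (b.trans hs)
  | assign a a' b => exact .assign a a' (b.trans hs)
  | toLabeled a b => exact .toLabeled a (b.trans hs)

/-- A source term (which mentions no locations) is indistinguishable from itself. -/
theorem CGTyped.toCR (A : L) (Ψ1 Ψ2 : List (L × CGTy L)) (β : ℕ → ℕ → Prop)
    (h : CGTyped Γ e τ) : CR A Ψ1 Ψ2 β Γ e e τ := by
  induction h with
  | var a => exact .var a (.refl _)
  | tt => exact .tt (.refl _)
  | ff => exact .ff (.refl _)
  | unit => exact .unit (.refl _)
  | lam _ a => exact .lam a (.refl _)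
  | app _ _ a a' => exact .app a a' (.refl _)
  | pair _ _ a a' => exact .pair a a' (.refl _)
  | fst _ a => exact .fst a (.refl _)
  | snd _ a => exact .snd a (.refl _)
  | inl _ a => exact .inl a (.refl _)
  | inr _ a => exact .inr a (.refl _)
  | case _ _ _ a a1 a2 => exact .case a a1 a2 (.refl _)
  | ret _ a => exact .ret a (.refl _)
  | bind _ _ c1 c2 c3 c4 a a' => exact .bind a a' c1 c2 c3 c4 (.refl _)
  | label _ a => exact .label a (.refl _)
  | unlabel _ a => exact .unlabel a (.refl _)
  | new _ a => exact .new a (.refl _)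
  | deref _ a => exact .deref a (.refl _)
  | assign _ _ a a' => exact .assign a a' (.refl _)
  | toLabeled _ a => exact .toLabeled a (.refl _)
  | sub _ hs a => exact a.sub hs

theorem CR.left (h : CR A Ψ1 Ψ2 β Γ e f τ) : CT Ψ1 Γ e τ := by
  induction h with
  | high _ a _ b => exact a.sub b
  | var a b => exact .var a b
  | tt b => exact .tt b
  | ff b => exact .ff b
  | unit b => exact .unit b
  | loc _ a _ b => exact .loc a b
  | lam _ b a => exact .lam a b
  | app _ _ b a a' => exact .app a a' b
  | pair _ _ b a a' => exact .pair a a' b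
  | fst _ b a => exact .fst a b
  | snd _ b a => exact .snd a b
  | inl _ b a => exact .inl a b
  | inr _ b a => exact .inr a b
  | case _ _ _ b a a1 a2 => exact .case a a1 a2 b
  | ret _ b a => exact .ret a b
  | bind _ _ c1 c2 c3 c4 b a a' => exact .bind a a' c1 c2 c3 c4 b
  | label _ b a => exact .label a b
  | unlabel _ b a => exact .unlabel a b
  | new _ b a => exact .new a b
  | deref _ b a => exact .deref a b
  | assign _ _ b a a' => exact .assign a a' b
  | toLabeled _ b a => exact .toLabeled a b

theorem CR.right (h : CR A Ψ1 Ψ2 β Γ e f τ) : CT Ψ2 Γ f τ := by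
  induction h with
  | high _ _ a b => exact a.sub b
  | var a b => exact .var a b
  | tt b => exact .tt b
  | ff b => exact .ff b
  | unit b => exact .unit b
  | loc _ _ a b => exact .loc a b
  | lam _ b a => exact .lam a b
  | app _ _ b a a' => exact .app a a' b
  | pair _ _ b a a' => exact .pair a a' b
  | fst _ b a => exact .fst a b
  | snd _ b a => exact .snd a b
  | inl _ b a => exact .inl a b
  | inr _ b a => exact .inr a b
  | case _ _ _ b a a1 a2 => exact .case a a1 a2 b
  | ret _ b a => exact .ret a b
  | bind _ _ c1 c2 c3 c4 b a a' => exact .bind a a' c1 c2 c3 c4 b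
  | label _ b a => exact .label a b
  | unlabel _ b a => exact .unlabel a b
  | new _ b a => exact .new a b
  | deref _ b a => exact .deref a b
  | assign _ _ b a a' => exact .assign a a' b
  | toLabeled _ b a => exact .toLabeled a b

/-- Weakening of the two store typings, of the matching, and at the end of the context. -/
theorem CR.weaken (x1 : StoreExt Ψ1 Ψ1') (x2 : StoreExt Ψ2 Ψ2') (xβ : ∀ n m, β n m → β' n m)
    (Δ : List (CGTy L)) (h : CR A Ψ1 Ψ2 β Γ e f τ) : CR A Ψ1' Ψ2' β' (Γ ++ Δ) e f τ := by
  induction h with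
  | high c a a' b => exact .high c (a.weaken x1 Δ) (a'.weaken x2 Δ) b
  | @var Γ n _ _ a b =>
    refine .var ?_ b
    rw [List.getElem?_append_left, a]
    by_contra hn
    rw [List.getElem?_eq_none (by omega)] at a
    exact absurd a (by simp)
  | tt b => exact .tt b
  | ff b => exact .ff b
  | unit b => exact .unit b
  | loc a a1 a2 b => exact .loc (xβ _ _ a) (x1 _ _ a1) (x2 _ _ a2) b
  | lam _ b a => exact .lam a b
  | app _ _ b a a' => exact .app a a' b
  | pair _ _ b a a' => exact .pair a a' b
  | fst _ b a => exact .fst a b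
  | snd _ b a => exact .snd a b
  | inl _ b a => exact .inl a b
  | inr _ b a => exact .inr a b
  | case _ _ _ b a a1 a2 => exact .case a a1 a2 b
  | ret _ b a => exact .ret a b
  | bind _ _ c1 c2 c3 c4 b a a' => exact .bind a a' c1 c2 c3 c4 b
  | label _ b a => exact .label a b
  | unlabel _ b a => exact .unlabel a b
  | new _ b a => exact .new a b
  | deref _ b a => exact .deref a b
  | assign _ _ b a a' => exact .assign a a' b
  | toLabeled _ b a => exact .toLabeled a b

theorem CR.mono (x1 : StoreExt Ψ1 Ψ1') (x2 : StoreExt Ψ2 Ψ2') (xβ : ∀ n m, β n m → β' n m)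
    (h : CR A Ψ1 Ψ2 β Γ e f τ) : CR A Ψ1' Ψ2' β' Γ e f τ := by
  simpa using h.weaken x1 x2 xβ []

theorem CR.subst_aux {Γ2 : List (CGTy L)} (hv : CR A Ψ1 Ψ2 β [] v w σ)
    (h : CR A Ψ1 Ψ2 β Γ e f τ) : ∀ Γ1, Γ = Γ1 ++ σ :: Γ2 →
      CR A Ψ1 Ψ2 β (Γ1 ++ Γ2) (e.subst v Γ1.length) (f.subst w Γ1.length) τ := by
  have hsh : v.shift 0 = v := hv.left.shift_eq 0 le_rfl
  have hsh' : w.shift 0 = w := hv.right.shift_eq 0 le_rfl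
  induction h with
  | high c a a' b =>
    rintro Γ1 rfl
    exact .high c (CT.subst_aux hv.left a Γ1 rfl) (CT.subst_aux hv.right a' Γ1 rfl) b
  | @var Γ n τ' τ a b =>
    rintro Γ1 rfl
    simp only [Exp.subst]
    split_ifs with h1 h2
    · subst h1
      simp only [List.getElem?_append_right le_rfl, Nat.sub_self, List.getElem?_cons_zero,
        Option.some.injEq] at a
      subst a
      simpa using (hv.sub b).weaken (.refl _) (.refl _) (fun _ _ h => h) (Γ1 ++ Γ2)
    · refine .var ?_ b
      rw [List.getElem?_append_right (by omega)] at a ⊢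
      rwa [show n - Γ1.length = (n - 1 - Γ1.length) + 1 by omega, List.getElem?_cons_succ] at a
    · exact .var (by rwa [List.getElem?_append_left (by omega)] at a ⊢) b
  | tt b => intros; exact .tt b
  | ff b => intros; exact .ff b
  | unit b => intros; exact .unit b
  | loc a a1 a2 b => intros; exact .loc a a1 a2 b
  | lam _ b a =>
    rintro Γ1 rfl; simp only [Exp.subst, hsh, hsh']; exact .lam (a (_ :: Γ1) rfl) b
  | app _ _ b a a' => intro Γ1 h; exact .app (a Γ1 h) (a' Γ1 h) b
  | pair _ _ b a a' => intro Γ1 h; exact .pair (a Γ1 h) (a' Γ1 h) b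
  | fst _ b a => intro Γ1 h; exact .fst (a Γ1 h) b
  | snd _ b a => intro Γ1 h; exact .snd (a Γ1 h) b
  | inl _ b a => intro Γ1 h; exact .inl (a Γ1 h) b
  | inr _ b a => intro Γ1 h; exact .inr (a Γ1 h) b
  | case _ _ _ b a a1 a2 =>
    rintro Γ1 rfl; simp only [Exp.subst, hsh, hsh']
    exact .case (a Γ1 rfl) (a1 (_ :: Γ1) rfl) (a2 (_ :: Γ1) rfl) b
  | ret _ b a => intro Γ1 h; exact .ret (a Γ1 h) b
  | bind _ _ c1 c2 c3 c4 b a a' =>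
    rintro Γ1 rfl; simp only [Exp.subst, hsh, hsh']
    exact .bind (a Γ1 rfl) (a' (_ :: Γ1) rfl) c1 c2 c3 c4 b
  | label _ b a => intro Γ1 h; exact .label (a Γ1 h) b
  | unlabel _ b a => intro Γ1 h; exact .unlabel (a Γ1 h) b
  | new _ b a => intro Γ1 h; exact .new (a Γ1 h) b
  | deref _ b a => intro Γ1 h; exact .deref (a Γ1 h) b
  | assign _ _ b a a' => intro Γ1 h; exact .assign (a Γ1 h) (a' Γ1 h) b
  | toLabeled _ b a => intro Γ1 h; exact .toLabeled (a Γ1 h) b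

theorem CR.subst (h : CR A Ψ1 Ψ2 β [σ] e f τ) (hv : CR A Ψ1 Ψ2 β [] v w σ) :
    CR A Ψ1 Ψ2 β [] (e.subst v 0) (f.subst w 0) τ :=
  CR.subst_aux hv h [] rfl

/-- Pure evaluation preserves indistinguishability. -/
theorem CR.pure (hp : CGPure e v) : ∀ {f w : Exp} {τ : CGTy L}, CR A Ψ1 Ψ2 β [] e f τ →
    CGPure f w → CR A Ψ1 Ψ2 β [] v w τ := by
  induction hp with
  | app p1 p2 p3 ih1 ih2 ih3 =>
    intro f w τ h hq
    cases h with
    | high c a a' b => exact .high c (a.pure (.app p1 p2 p3)) (a'.pure hq) b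
    | app a1 a2 hs =>
      cases hq with | app q1 q2 q3 =>
        cases ih1 a1 q1 with
        | high _ _ _ b => cases b
        | lam b hb => cases hb with | fn hb1 hb2 =>
          exact (ih3 (b.subst ((ih2 a2 q2).sub hb1)) q3).sub (hb2.trans hs)
  | pair p1 p2 ih1 ih2 =>
    intro f w τ h hq
    cases h with
    | high c a a' b => exact .high c (a.pure (.pair p1 p2)) (a'.pure hq) b
    | pair a a' b => cases hq with | pair q1 q2 => exact .pair (ih1 a q1) (ih2 a' q2) b
  | fst p ih =>
    intro f w τ h hq
    cases h with
    | high c a a' b => exact .high c (a.pure (.fst p)) (a'.pure hq) b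
    | fst a b =>
      cases hq with | fst q =>
        cases ih a q with
        | high _ _ _ b => cases b
        | pair c c' d => cases d with | prod d1 d2 => exact c.sub (d1.trans b)
  | snd p ih =>
    intro f w τ h hq
    cases h with
    | high c a a' b => exact .high c (a.pure (.snd p)) (a'.pure hq) b
    | snd a b =>
      cases hq with | snd q =>
        cases ih a q with
        | high _ _ _ b => cases b
        | pair c c' d => cases d with | prod d1 d2 => exact c'.sub (d2.trans b)
  | inl p ih =>
    intro f w τ h hq
    cases h with
    | high c a a' b => exact .high c (a.pure (.inl p)) (a'.pure hq) b
    | inl a b => cases hq with | inl q => exact .inl (ih a q) b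
  | inr p ih =>
    intro f w τ h hq
    cases h with
    | high c a a' b => exact .high c (a.pure (.inr p)) (a'.pure hq) b
    | inr a b => cases hq with | inr q => exact .inr (ih a q) b
  | caseL p1 p2 ih1 ih2 =>
    intro f w τ h hq
    cases h with
    | high c a a' b => exact .high c (a.pure (.caseL p1 p2)) (a'.pure hq) b
    | case a a1 a2 b =>
      cases hq with
      | caseL q1 q2 =>
        cases ih1 a q1 with
        | high _ _ _ b => cases b
        | inl c d => cases d with | sum d1 d2 => exact (ih2 (a1.subst (c.sub d1)) q2).sub b
      | caseR q1 q2 => cases ih1 a q1 with | high _ _ _ b => cases b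
  | caseR p1 p2 ih1 ih2 =>
    intro f w τ h hq
    cases h with
    | high c a a' b => exact .high c (a.pure (.caseR p1 p2)) (a'.pure hq) b
    | case a a1 a2 b =>
      cases hq with
      | caseR q1 q2 =>
        cases ih1 a q1 with
        | high _ _ _ b => cases b
        | inr c d => cases d with | sum d1 d2 => exact (ih2 (a2.subst (c.sub d2)) q2).sub b
      | caseL q1 q2 => cases ih1 a q1 with | high _ _ _ b => cases b
  | label p ih =>
    intro f w τ h hq
    cases h with
    | high c a a' b => exact .high c (a.pure (.label p)) (a'.pure hq) b
    | label a b => cases hq with | label q => exact .label (ih a q) b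
  | _ =>
    -- The left term is a value; so is the right one unless the rule `high` was used.
    intro f w τ h hq
    have h0 := h
    cases h with
    | high c a a' b => exact .high c a (a'.pure hq) b
    | _ => cases hq; exact h0

/-- Indistinguishability of heaps: each conforms to its store typing, `β` is a partial bijection
between locations of the same type, and matched locations hold indistinguishable contents. -/
structure HR (A : L) (Ψ1 Ψ2 : List (L × CGTy L)) (β : ℕ → ℕ → Prop) (h1 h2 : Heap) : Prop where
  left : HT Ψ1 h1
  right : HT Ψ2 h2
  inj : ∀ n m n' m', β n m → β n' m' → (n = n' ↔ m = m')
  rel : ∀ n m, β n m → ∃ l τ, Ψ1[n]? = some (l, τ) ∧ Ψ2[m]? = some (l, τ) ∧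
    ∀ v w, h1[n]? = some v → h2[m]? = some w → CR A Ψ1 Ψ2 β [] v w (.labeled l τ)

theorem getElem?_lt {α : Type} {xs : List α} {n : ℕ} {a : α} (h : xs[n]? = some a) :
    n < xs.length := by
  by_contra hn
  rw [List.getElem?_eq_none (by omega)] at h
  exact absurd h (by simp)

theorem HR.append {l : L} {h1 h2 : Heap} (hh : HR A Ψ1 Ψ2 β h1 h2)
    (hv : CR A Ψ1 Ψ2 β [] v w (.labeled l τ)) :
    HR A (Ψ1 ++ [(l, τ)]) (Ψ2 ++ [(l, τ)])
      (fun n m => β n m ∨ (n = h1.length ∧ m = h2.length)) (h1 ++ [v]) (h2 ++ [w]) := by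
  have hlt : ∀ n m, β n m → n < h1.length ∧ m < h2.length := fun n m h => by
    obtain ⟨l, τ, a, b, -⟩ := hh.rel n m h
    rw [hh.left.1, hh.right.1]
    exact ⟨getElem?_lt a, getElem?_lt b⟩
  refine ⟨hh.left.append hv.left, hh.right.append hv.right, ?_, ?_⟩
  · rintro n m n' m' (h | ⟨rfl, rfl⟩) (h' | ⟨rfl, rfl⟩)
    · exact hh.inj _ _ _ _ h h'
    · have := hlt _ _ h; omega
    · have := hlt _ _ h'; omega
    · simp
  · rintro n m (h | ⟨rfl, rfl⟩)
    · obtain ⟨l', τ', a, b, c⟩ := hh.rel n m h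
      refine ⟨l', τ', StoreExt.append _ _ _ _ a, StoreExt.append _ _ _ _ b, fun v' w' p q => ?_⟩
      rw [List.getElem?_append_left (hlt _ _ h).1] at p
      rw [List.getElem?_append_left (hlt _ _ h).2] at q
      exact (c _ _ p q).mono (.append _ _) (.append _ _) fun _ _ h => .inl h
    · refine ⟨l, τ, by rw [hh.left.1]; simp, by rw [hh.right.1]; simp, fun v' w' p q => ?_⟩
      simp only [List.getElem?_concat_length, Option.some.injEq] at p q
      subst p q
      exact hv.mono (.append _ _) (.append _ _) fun _ _ h => .inl h

theorem HR.set {l : L} {h1 h2 : Heap} {n m : ℕ} (hh : HR A Ψ1 Ψ2 β h1 h2) (hnm : β n m)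
    (hn : Ψ1[n]? = some (l, τ)) (hm : Ψ2[m]? = some (l, τ))
    (hv : CR A Ψ1 Ψ2 β [] v w (.labeled l τ)) :
    HR A Ψ1 Ψ2 β (h1.set n v) (h2.set m w) := by
  refine ⟨hh.left.set hn hv.left, hh.right.set hm hv.right, hh.inj, fun n' m' h => ?_⟩
  obtain ⟨l', τ', a, b, c⟩ := hh.rel n' m' h
  refine ⟨l', τ', a, b, fun v' w' p q => ?_⟩
  have hi := hh.inj _ _ _ _ hnm h
  by_cases hnn : n = n'
  · obtain rfl := hi.1 hnn
    subst hnn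
    rw [hn] at a
    cases a
    rw [List.getElem?_set_self (by rw [hh.left.1]; exact getElem?_lt hn)] at p
    rw [List.getElem?_set_self (by rw [hh.right.1]; exact getElem?_lt hm)] at q
    cases p; cases q
    exact hv
  · rw [List.getElem?_set_ne hnn] at p
    rw [List.getElem?_set_ne fun hc => hnn (hi.2 hc)] at q
    exact c _ _ p q

/-- Two independent steps that leave the locations visible to the adversary untouched keep the
heaps indistinguishable: contents of the other matched locations are related by `CR.high`. -/
theorem HR.highStep {h1 h2 h1' h2' : Heap} {l3 : L} (hh : HR A Ψ1 Ψ2 β h1 h2) (hl3 : ¬ l3 ≤ A)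
    (x1 : StoreExt Ψ1 Ψ1') (x2 : StoreExt Ψ2 Ψ2') (t1 : HT Ψ1' h1') (t2 : HT Ψ2' h2')
    (u1 : ∀ (n : ℕ) l σ, Ψ1[n]? = some (l, σ) → ¬ l3 ≤ l → h1'[n]? = h1[n]?)
    (u2 : ∀ (n : ℕ) l σ, Ψ2[n]? = some (l, σ) → ¬ l3 ≤ l → h2'[n]? = h2[n]?) :
    HR A Ψ1' Ψ2' β h1' h2' := by
  refine ⟨t1, t2, hh.inj, fun n m h => ?_⟩
  obtain ⟨l, τ, a, b, c⟩ := hh.rel n m h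
  refine ⟨l, τ, x1 _ _ a, x2 _ _ b, fun v w p q => ?_⟩
  by_cases hl : l ≤ A
  · rw [u1 n l τ a fun hc => hl3 (hc.trans hl)] at p
    rw [u2 m l τ b fun hc => hl3 (hc.trans hl)] at q
    exact (c _ _ p q).mono x1 x2 fun _ _ h => h
  · exact .high hl (t1.2 _ _ _ _ (x1 _ _ a) p) (t2.2 _ _ _ _ (x2 _ _ b) q) (.refl _)

/-- Forcing preserves indistinguishability of heaps; the results are well typed, and
indistinguishable if the adversary may see the taint label `l2`. -/
theorem CR.force {h1 h1' : Heap} (hf : CGForce h1 e h1' v) :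
    ∀ {h2 h2' : Heap} {f w : Exp} {Ψ1 Ψ2 : List (L × CGTy L)} {β : ℕ → ℕ → Prop} {l1 l2 : L}
      {τ : CGTy L}, CGForce h2 f h2' w → CR A Ψ1 Ψ2 β [] e f (.monad l1 l2 τ) →
      HR A Ψ1 Ψ2 β h1 h2 →
      ∃ Ψ1' Ψ2' β', StoreExt Ψ1 Ψ1' ∧ StoreExt Ψ2 Ψ2' ∧ (∀ n m, β n m → β' n m) ∧
        HR A Ψ1' Ψ2' β' h1' h2' ∧ CT Ψ1' [] v τ ∧ CT Ψ2' [] w τ ∧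
        (l2 ≤ A → CR A Ψ1' Ψ2' β' [] v w τ) := by
  -- Two related computations have the same head: mixed cases can only come from the rule `high`,
  -- whose type `labeled _ _` is not a subtype of a monadic type.
  induction hf with
  | ret p1 p2 =>
    intro h2 h2' f w Ψ1 Ψ2 β l1 l2 τ hf' hr hh
    cases hf' with
    | ret q1 q2 =>
      cases hr.pure p1 q1 with
      | high _ _ _ b => cases b
      | ret a b => cases b with | monad b1 b2 b3 =>
        have key := (a.pure p2 q2).sub b3
        exact ⟨Ψ1, Ψ2, β, .refl _, .refl _, fun _ _ h => h, hh, key.left, key.right, fun _ => key⟩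
    | bind q1 | unlabel q1 | toLabeled q1 | new q1 | deref q1 | assign q1 =>
      cases hr.pure p1 q1 with | high _ _ _ b => cases b
  | bind p1 r1 r2 ih1 ih2 =>
    intro h2 h2' f w Ψ1 Ψ2 β l1 l2 τ hf' hr hh
    cases hf' with
    | bind q1 s1 s2 =>
      cases hr.pure p1 q1 with
      | high _ _ _ b => cases b
      | @bind _ _ _ k1 k2 _ _ _ k3 k4 _ k _ a a' c1 c2 c3 c4 b =>
        cases b with | monad b1 b2 b3 =>
        obtain ⟨Φ1, Φ2, γ, x1, x2, xβ, hh', t1, t2, hlow⟩ := ih1 s1 a hh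
        by_cases hk : k2 ≤ A
        · obtain ⟨Φ1', Φ2', γ', y1, y2, yβ, hh'', u1, u2, hlow'⟩ :=
            ih2 s2 ((a'.mono x1 x2 xβ).subst (hlow hk)) hh'
          exact ⟨Φ1', Φ2', γ', x1.trans y1, x2.trans y2, fun n m h => yβ _ _ (xβ _ _ h), hh'',
            u1.sub b3, u2.sub b3, fun hl => (hlow' (b2.trans hl)).sub b3⟩
        · -- The continuations depend on a secret, hence run under a secret pc-label.
          obtain ⟨Φ1', y1, g1, u1, w1⟩ := CT.force r2 ((a'.left.mono x1).subst t1) hh'.left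
          obtain ⟨Φ2', y2, g2, u2, w2⟩ := CT.force s2 ((a'.right.mono x2).subst t2) hh'.right
          exact ⟨Φ1', Φ2', γ, x1.trans y1, x2.trans y2, xβ,
            hh'.highStep (fun hc => hk (c3.trans hc)) y1 y2 g1 g2 w1 w2, u1.sub b3, u2.sub b3,
            fun hl => absurd (c4.trans (b2.trans hl)) hk⟩
    | ret q1 | unlabel q1 | toLabeled q1 | new q1 | deref q1 | assign q1 =>
      cases hr.pure p1 q1 with | high _ _ _ b => cases b
  | unlabel p1 p2 =>
    intro h2 h2' f w Ψ1 Ψ2 β l1 l2 τ hf' hr hh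
    cases hf' with
    | unlabel q1 q2 =>
      cases hr.pure p1 q1 with
      | high _ _ _ b => cases b
      | unlabel a b => cases b with | monad b1 b2 b3 =>
        cases a.pure p2 q2 with
        | high c a1 a2 b => cases b with | labeled d1 d2 =>
          cases a1 with | label a1 m1 => cases m1 with | labeled m1 _ =>
          cases a2 with | label a2 m2 => cases m2 with | labeled m2 _ =>
          exact ⟨Ψ1, Ψ2, β, .refl _, .refl _, fun _ _ h => h, hh, a1.sub (m1.trans (d1.trans b3)),
            a2.sub (m2.trans (d1.trans b3)), fun hl => absurd (d2.trans (b2.trans hl)) c⟩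
        | label c d => cases d with | labeled d1 d2 =>
          have key := c.sub (d1.trans b3)
          exact ⟨Ψ1, Ψ2, β, .refl _, .refl _, fun _ _ h => h, hh, key.left, key.right,
            fun _ => key⟩
    | ret q1 | bind q1 | toLabeled q1 | new q1 | deref q1 | assign q1 =>
      cases hr.pure p1 q1 with | high _ _ _ b => cases b
  | toLabeled p1 r1 ih =>
    intro h2 h2' f w Ψ1 Ψ2 β l1 l2 τ hf' hr hh
    cases hf' with
    | toLabeled q1 s1 =>
      cases hr.pure p1 q1 with
      | high _ _ _ b => cases b
      | @toLabeled _ _ _ k k' _ _ a b => cases b with | monad b1 b2 b3 =>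
        obtain ⟨Φ1, Φ2, γ, x1, x2, xβ, hh', t1, t2, hlow⟩ := ih s1 a hh
        refine ⟨Φ1, Φ2, γ, x1, x2, xβ, hh', .label t1 b3, .label t2 b3, fun _ => ?_⟩
        by_cases hk : k' ≤ A
        · exact .label (hlow hk) b3
        · exact .high hk (.label t1 (.refl _)) (.label t2 (.refl _)) b3
    | ret q1 | bind q1 | unlabel q1 | new q1 | deref q1 | assign q1 =>
      cases hr.pure p1 q1 with | high _ _ _ b => cases b
  | @new e e0 v h1 p1 p2 =>
    intro h2 h2' f w Ψ1 Ψ2 β l1 l2 τ hf' hr hh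
    cases hf' with
    | new q1 q2 =>
      cases hr.pure p1 q1 with
      | high _ _ _ b => cases b
      | @new _ _ _ k τ0 _ a b => cases b with | monad b1 b2 b3 =>
        have key : CR A (Ψ1 ++ [(k, τ0)]) (Ψ2 ++ [(k, τ0)])
            (fun n m => β n m ∨ (n = h1.length ∧ m = h2.length)) []
            (.loc h1.length) (.loc h2.length) τ :=
          .loc (.inr ⟨rfl, rfl⟩) (by rw [hh.left.1]; simp) (by rw [hh.right.1]; simp) b3
        exact ⟨_, _, _, .append _ _, .append _ _, fun _ _ h => .inl h, hh.append (a.pure p2 q2),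
          key.left, key.right, fun _ => key⟩
    | ret q1 | bind q1 | unlabel q1 | toLabeled q1 | deref q1 | assign q1 =>
      cases hr.pure p1 q1 with | high _ _ _ b => cases b
  | deref p1 p2 p3 =>
    intro h2 h2' f w Ψ1 Ψ2 β l1 l2 τ hf' hr hh
    cases hf' with
    | deref q1 q2 q3 =>
      cases hr.pure p1 q1 with
      | high _ _ _ b => cases b
      | deref a b => cases b with | monad b1 b2 b3 =>
        cases a.pure p2 q2 with
        | high _ _ _ b => cases b
        | loc c m1 m2 d =>
          cases d
          obtain ⟨l', τ', n1, n2, n3⟩ := hh.rel _ _ c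
          rw [m1] at n1
          cases n1
          have key := (n3 _ _ p3 q3).sub b3
          exact ⟨Ψ1, Ψ2, β, .refl _, .refl _, fun _ _ h => h, hh, key.left, key.right,
            fun _ => key⟩
    | ret q1 | bind q1 | unlabel q1 | toLabeled q1 | new q1 | assign q1 =>
      cases hr.pure p1 q1 with | high _ _ _ b => cases b
  | assign p1 p2 p3 =>
    intro h2 h2' f w Ψ1 Ψ2 β l1 l2 τ hf' hr hh
    cases hf' with
    | assign q1 q2 q3 =>
      cases hr.pure p1 q1 with
      | high _ _ _ b => cases b
      | assign a a' b => cases b with | monad b1 b2 b3 =>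
        cases a.pure p2 q2 with
        | high _ _ _ b => cases b
        | loc c m1 m2 d =>
          cases d
          exact ⟨Ψ1, Ψ2, β, .refl _, .refl _, fun _ _ h => h, hh.set c m1 m2 (a'.pure p3 q3),
            .unit b3, .unit b3, fun _ => .unit b3⟩
    | ret q1 | bind q1 | unlabel q1 | toLabeled q1 | new q1 | deref q1 =>
      cases hr.pure p1 q1 with | high _ _ _ b => cases b

/-- Indistinguishable values of type `labeled A bool` are equal, as `A` may see level `A`. -/
theorem CR.bool_eq (h : CR A Ψ1 Ψ2 β [] v w (.labeled A .bool)) (hv : CGVal v) (hw : CGVal w) :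
    v = w := by
  cases h with
  | high c _ _ b => cases b with | labeled _ b => exact absurd b c
  | label a b =>
    cases b with | labeled b _ =>
    cases b
    cases hv with | label hv => cases hw with | label hw =>
    cases a with
    | high _ _ _ b => cases b
    | tt => rfl
    | ff => rfl
    | var a => simp at a
    | loc _ _ _ b => cases b
    | unit b => cases b
    | lam _ b => cases b
    | pair _ _ b => cases b
    | inl _ b => cases b
    | inr _ b => cases b
    | ret _ b => cases b
    | bind _ _ _ _ _ _ b => cases b
    | label _ b => cases b
    | unlabel _ b => cases b
    | new _ b => cases b
    | deref _ b => cases b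
    | assign _ _ b => cases b
    | toLabeled _ b => cases b
    | app => cases hv
    | fst => cases hv
    | snd => cases hv
    | case => cases hv
  | var a => simp at a
  | app => cases hv
  | fst => cases hv
  | snd => cases hv
  | case => cases hv
  | loc _ _ _ b => cases b
  | tt b => cases b
  | ff b => cases b
  | unit b => cases b
  | lam _ b => cases b
  | pair _ _ b => cases b
  | inl _ b => cases b
  | inr _ b => cases b
  | ret _ b => cases b
  | bind _ _ _ _ _ _ b => cases b
  | unlabel _ b => cases b
  | new _ b => cases b
  | deref _ b => cases b
  | assign _ _ b => cases b
  | toLabeled _ b => cases b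

end Binary

/-! ## STATEMENT 7: Well-typed FG programs translate to noninterfering CG programs -/

theorem fg2cg_target_noninterference
    {L : Type} [Lattice L] [BoundedOrder L]
    (li l pc : L) (τA : FGTy L) (hlab : τA.lab = li) (es ec v1 v2 : Exp)
    (hflow : ¬ li ≤ l)
    (hty : FGTyped [τA] pc es (FGTy.bool l))
    (htr : FG2CG [τA] pc es (FGTy.bool l) ec)
    (hv1 : CGVal v1) (hv1ty : CGTyped ([] : List (CGTy L)) v1 (toCG τA))
    (hv2 : CGVal v2) (hv2ty : CGTyped ([] : List (CGTy L)) v2 (toCG τA))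
    (h1 h2 : Heap) (r1 r2 : Exp)
    (hrun1 : CGForce [] (ec.subst v1 0) h1 r1)
    (hrun2 : CGForce [] (ec.subst v2 0) h2 r2) :
    r1 = r2 := by
  subst hlab
  have hec : CR l [] [] (fun _ _ => False) [toCG τA] ec ec (.monad pc ⊥ (toCG (.bool l))) :=
    htr.typed.toCR l [] [] _
  have hv : CR l [] [] (fun _ _ => False) [] v1 v2 (toCG τA) :=
    .high hflow (hv1ty.toCT []) (hv2ty.toCT []) (.refl _)
  have hheap : HR l [] [] (fun _ _ => False) [] [] :=
    ⟨⟨rfl, by simp⟩, ⟨rfl, by simp⟩, fun _ _ _ _ h => h.elim, fun _ _ h => h.elim⟩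
  obtain ⟨Ψ1, Ψ2, β, -, -, -, -, -, -, hr⟩ := CR.force hrun1 hrun2 (hec.subst hv) hheap
  exact (hr bot_le).bool_eq (hrun1.val (by simp)).2 (hrun2.val (by simp)).2
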